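/- arXiv:2312.15995 — 3 statements merged into one kernel-verified Lean document; each statement's English description precedes it below -/
import Mathlib

section
/- Upper bound on the largest eigenvalue of the tail kernel matrix. Assume β_k < ∞ for all k, that the eigenvalues are in non-increasing order λ_1 ≥ λ_2 ≥ …, and the regularity assumption holds. Then there exist absolute constants c, c' > 0 such that for every n ≥ 1 and k ≥ 1, with probability at least 1 − 4·(r_k/k⁴)·exp(−(c'/β_k)·(n/r_k)) over X drawn i.i.d. from μ: μ₁((1/n)·K_{>k}) ≤ c·( λ_{k+1} + β_k·log(k+1)·tr(Σ_{>k})/n ). -/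
open MeasureTheory Matrix Filter

noncomputable section

namespace KRRPaper

universe u

variable {𝒳 : Type u}

/-- `tr(Σ_{>k})`, with 0-based indexing (Lean index `i` = paper index `i+1`). -/
def trTail (lam : ℕ → ℝ) (k : ℕ) : ℝ := ∑' i : ℕ, lam (k + i)

/-- `tr(Σ_{>k}²)` -/
def trTailSq (lam : ℕ → ℝ) (k : ℕ) : ℝ := ∑' i : ℕ, (lam (k + i)) ^ 2

/-- `‖Σ_{>k}‖ = sup_{i>k} λ_i` -/
def opTail (lam : ℕ → ℝ) (k : ℕ) : ℝ := ⨆ i : ℕ, lam (k + i)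

/-- effective rank `r_k` -/
def rEff (lam : ℕ → ℝ) (k : ℕ) : ℝ := trTail lam k / opTail lam k

/-- effective rank `R_k` -/
def REff (lam : ℕ → ℝ) (k : ℕ) : ℝ := (trTail lam k) ^ 2 / trTailSq lam k

/-- the function whose essential supremum defines `β_k` -/
def betaF (lam : ℕ → ℝ) (ψ : ℕ → 𝒳 → ℝ) (k : ℕ) (x : 𝒳) : ℝ :=
  max (max ((∑ i ∈ Finset.range k, (ψ i x) ^ 2) / k)
        ((∑' i : ℕ, lam (k + i) * (ψ (k + i) x) ^ 2) / trTail lam k))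
      ((∑' i : ℕ, (lam (k + i)) ^ 2 * (ψ (k + i) x) ^ 2) / trTailSq lam k)

/-- `β_k`, the essential supremum of `betaF` -/
def betaQ [MeasurableSpace 𝒳] (μ : Measure 𝒳) (lam : ℕ → ℝ) (ψ : ℕ → 𝒳 → ℝ) (k : ℕ) : ℝ :=
  essSup (betaF lam ψ k) μ

def alphaF (lam : ℕ → ℝ) (ψ : ℕ → 𝒳 → ℝ) (k : ℕ) (x : 𝒳) : ℝ :=
  (∑' i : ℕ, lam (k + i) * (ψ (k + i) x) ^ 2) / trTail lam k

/-- `α_k`, the essential infimum of `alphaF` -/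
def alphaQ [MeasurableSpace 𝒳] (μ : Measure 𝒳) (lam : ℕ → ℝ) (ψ : ℕ → 𝒳 → ℝ) (k : ℕ) : ℝ :=
  essInf (alphaF lam ψ k) μ

/-- the hypothesis `β_k < ∞` -/
def BetaFinite [MeasurableSpace 𝒳] (μ : Measure 𝒳) (lam : ℕ → ℝ) (ψ : ℕ → 𝒳 → ℝ) (k : ℕ) : Prop :=
  ∃ C : ℝ, ∀ᵐ x ∂μ, betaF lam ψ k x ≤ C

/-- `(ψ_i)` is an orthonormal family in `L²(μ)` -/
def OrthonormalFamily [MeasurableSpace 𝒳] (μ : Measure 𝒳) (ψ : ℕ → 𝒳 → ℝ) : Prop :=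
  (∀ i, MemLp (ψ i) 2 μ) ∧
    ∀ i j, ∫ x, ψ i x * ψ j x ∂μ = if i = j then (1 : ℝ) else 0

/-- the regularity assumption -/
def RegularityAssumption [MeasurableSpace 𝒳] (μ : Measure 𝒳) (lam : ℕ → ℝ)
    (ψ : ℕ → 𝒳 → ℝ) : Prop :=
  (∃ N : ℕ, ∀ i, N ≤ i → lam i = 0) ∨
    ∃ ks : ℕ → ℕ, StrictMono ks ∧
      Tendsto (fun i => betaQ μ lam ψ (ks i) * trTail lam (ks i)) atTop (nhds 0)

/-- the kernel matrix `K` -/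
def kerMat (lam : ℕ → ℝ) (ψ : ℕ → 𝒳 → ℝ) {n : ℕ} (X : Fin n → 𝒳) :
    Matrix (Fin n) (Fin n) ℝ :=
  Matrix.of fun j l => ∑' i : ℕ, lam i * ψ i (X j) * ψ i (X l)

/-- the tail kernel matrix `K_{>k}` -/
def kerMatGT (lam : ℕ → ℝ) (ψ : ℕ → 𝒳 → ℝ) (k : ℕ) {n : ℕ} (X : Fin n → 𝒳) :
    Matrix (Fin n) (Fin n) ℝ :=
  Matrix.of fun j l => ∑' i : ℕ, lam (k + i) * ψ (k + i) (X j) * ψ (k + i) (X l)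

/-- the matrix `M` with entries `∑ᵢ λᵢ² ψᵢ(x_j) ψᵢ(x_l)` -/
def sqKerMat (lam : ℕ → ℝ) (ψ : ℕ → 𝒳 → ℝ) {n : ℕ} (X : Fin n → 𝒳) :
    Matrix (Fin n) (Fin n) ℝ :=
  Matrix.of fun j l => ∑' i : ℕ, (lam i) ^ 2 * ψ i (X j) * ψ i (X l)

/-- `ψ_{≤k}(X)`, the `n × k` design matrix -/
def psiMat (ψ : ℕ → 𝒳 → ℝ) (k : ℕ) {n : ℕ} (X : Fin n → 𝒳) :
    Matrix (Fin n) (Fin k) ℝ :=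
  Matrix.of fun j i => ψ (i : ℕ) (X j)

/-- `eigval M j` is the `j`-th largest eigenvalue (`j` is 1-based) of a real symmetric
matrix `M`; junk value `0` if `M` is not symmetric or `j` is out of range. -/
def eigval {n : ℕ} (M : Matrix (Fin n) (Fin n) ℝ) (j : ℕ) : ℝ := by
  classical
  exact if h : M.IsHermitian then
    if hj : j - 1 < n then
      (h.eigenvalues ∘ ⇑(Tuple.sort h.eigenvalues)) (Fin.rev ⟨j - 1, hj⟩)
    else 0
  else 0

/-- `A = K + nγ_n I` -/
def ridgeMat (lam : ℕ → ℝ) (ψ : ℕ → 𝒳 → ℝ) {n : ℕ} (X : Fin n → 𝒳) (γ : ℝ) :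
    Matrix (Fin n) (Fin n) ℝ :=
  kerMat lam ψ X + ((n : ℝ) * γ) • (1 : Matrix (Fin n) (Fin n) ℝ)

/-- the variance `V = σ_ε² tr(A⁻¹ M A⁻¹)` of kernel ridge regression -/
def varKRR (lam : ℕ → ℝ) (ψ : ℕ → 𝒳 → ℝ) {n : ℕ} (X : Fin n → 𝒳) (γ σ : ℝ) : ℝ :=
  σ ^ 2 * ((ridgeMat lam ψ X γ)⁻¹ * sqKerMat lam ψ X * (ridgeMat lam ψ X γ)⁻¹).trace

/-- the KRR coefficient vector `θ̂(y)` -/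
def thetaHat (lam : ℕ → ℝ) (ψ : ℕ → 𝒳 → ℝ) {n : ℕ} (X : Fin n → 𝒳) (γ : ℝ)
    (y : Fin n → ℝ) (i : ℕ) : ℝ :=
  Real.sqrt (lam i) * ∑ j, ψ i (X j) * ((ridgeMat lam ψ X γ)⁻¹ *ᵥ y) j

/-- the noiseless labels `φ(X)θ*` -/
def labels (lam : ℕ → ℝ) (ψ : ℕ → 𝒳 → ℝ) {n : ℕ} (X : Fin n → 𝒳) (θ : ℕ → ℝ) :
    Fin n → ℝ :=
  fun j => ∑' i : ℕ, Real.sqrt (lam i) * ψ i (X j) * θ i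

/-- the bias `B` of kernel ridge regression -/
def biasKRR (lam : ℕ → ℝ) (ψ : ℕ → 𝒳 → ℝ) {n : ℕ} (X : Fin n → 𝒳) (γ : ℝ) (θ : ℕ → ℝ) : ℝ :=
  ∑' i : ℕ, lam i * (thetaHat lam ψ X γ (labels lam ψ X θ) i - θ i) ^ 2

/-- the concentration coefficient `ρ_{k,n}` -/
def rhoCoef (lam : ℕ → ℝ) (ψ : ℕ → 𝒳 → ℝ) (k : ℕ) {n : ℕ} (X : Fin n → 𝒳) (γ : ℝ) : ℝ :=
  (opTail lam k + eigval ((n : ℝ)⁻¹ • kerMatGT lam ψ k X) 1 + γ) /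
    (eigval ((n : ℝ)⁻¹ • kerMatGT lam ψ k X) n + γ)

/-- the i.i.d. sample measure `μ^{⊗n}` on `Fin n → 𝒳` -/
def iid [MeasurableSpace 𝒳] (μ : Measure 𝒳) (n : ℕ) : Measure (Fin n → 𝒳) :=
  Measure.pi fun _ => μ



theorem spec_pow {D : ℕ} (S : Matrix (Fin D) (Fin D) ℝ) (hS : S.IsHermitian) (p : ℕ) :
    S ^ p = (hS.eigenvectorUnitary : Matrix (Fin D) (Fin D) ℝ) * diagonal (fun i => hS.eigenvalues i ^ p)
      * star (hS.eigenvectorUnitary : Matrix (Fin D) (Fin D) ℝ) := by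
  conv_lhs => rw [hS.spectral_theorem]
  rw [← map_pow, Unitary.conjStarAlgAut_apply, Matrix.diagonal_pow]
  rfl

theorem spec_trace {D : ℕ} (S : Matrix (Fin D) (Fin D) ℝ) (hS : S.IsHermitian) (p : ℕ) :
    (S ^ p).trace = ∑ i, hS.eigenvalues i ^ p := by
  rw [spec_pow S hS p, Matrix.trace_mul_comm, ← mul_assoc]
  simp [Matrix.trace_diagonal]

theorem spec_rep {D : ℕ} (S : Matrix (Fin D) (Fin D) ℝ) (hS : S.PosSemidef) (v : Fin D → ℝ) :
    ∃ w d : Fin D → ℝ, (∀ i, 0 ≤ w i) ∧ (∀ i, 0 ≤ d i) ∧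
      ∀ a : ℕ, v ⬝ᵥ ((S ^ a) *ᵥ v) = ∑ i, w i * d i ^ a := by
  set U := (hS.1.eigenvectorUnitary : Matrix (Fin D) (Fin D) ℝ) with hU
  refine ⟨fun i => ((star U *ᵥ v) i) ^ 2, hS.1.eigenvalues, fun i => sq_nonneg _,
    fun i => hS.eigenvalues_nonneg i, fun a => ?_⟩
  rw [spec_pow S hS.1 a, ← hU, ← mulVec_mulVec, ← mulVec_mulVec, dotProduct_mulVec]
  have : v ᵥ* U = star U *ᵥ v := by
    rw [Matrix.star_eq_conjTranspose, conjTranspose_eq_transpose_of_trivial, mulVec_transpose]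
  rw [this, dotProduct]
  refine Finset.sum_congr rfl fun i _ => ?_
  rw [mulVec_diagonal]; ring

/-- `E f(Z_n)`, `Z_n = L·Bin(n,q)` -/
noncomputable def binE (q L : ℝ) : ℕ → (ℝ → ℝ) → ℝ
  | 0, f => f 0
  | n + 1, f => (1 - q) * binE q L n f + q * binE q L n (fun x => f (x + L))

theorem binE_add (q L : ℝ) (n : ℕ) : ∀ f g : ℝ → ℝ,
    binE q L n (fun x => f x + g x) = binE q L n f + binE q L n g := by
  induction n with
  | zero => intro f g; rfl
  | succ n ih => intro f g; simp only [binE, ih]; ring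

theorem binE_smul (q L : ℝ) (n : ℕ) : ∀ (c : ℝ) (f : ℝ → ℝ),
    binE q L n (fun x => c * f x) = c * binE q L n f := by
  induction n with
  | zero => intro f g; rfl
  | succ n ih => intro f g; simp only [binE, ih]; ring

theorem binE_sum (q L : ℝ) (n : ℕ) {ι : Type*} (s : Finset ι) (f : ι → ℝ → ℝ) :
    binE q L n (fun x => ∑ i ∈ s, f i x) = ∑ i ∈ s, binE q L n (f i) := by
  classical
  induction s using Finset.induction_on with
  | empty => simpa using binE_smul q L n 0 (fun _ => 0)
  | insert a s ha ih => simp only [Finset.sum_insert ha, binE_add, ih]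

theorem binE_mono (q L : ℝ) (hq : 0 ≤ q) (hq1 : q ≤ 1) (hL : 0 ≤ L) (n : ℕ) : ∀ f g : ℝ → ℝ,
    (∀ x, 0 ≤ x → f x ≤ g x) → binE q L n f ≤ binE q L n g := by
  induction n with
  | zero => intro f g h; exact h 0 le_rfl
  | succ n ih =>
    intro f g h
    simp only [binE]
    exact add_le_add (mul_le_mul_of_nonneg_left (ih _ _ h) (by linarith))
      (mul_le_mul_of_nonneg_left (ih _ _ fun x hx => h _ (by linarith)) hq)

theorem binE_exp (q L θ : ℝ) (n : ℕ) :
    binE q L n (fun x => Real.exp (θ * x)) = (1 + q * (Real.exp (θ * L) - 1)) ^ n := by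
  induction n with
  | zero => simp [binE]
  | succ n ih =>
    have : (fun x => Real.exp (θ * (x + L))) = fun x => Real.exp (θ * L) * Real.exp (θ * x) := by
      funext x; rw [← Real.exp_add]; ring_nf
    simp only [binE, this, binE_smul, ih]; ring

theorem binE_one (q L : ℝ) (n : ℕ) : binE q L n (fun _ => 1) = 1 := by
  simpa using binE_exp q L 0 n

theorem binE_pow_succ (q L : ℝ) (n p : ℕ) (hp : 1 ≤ p) :
    binE q L (n+1) (fun x => x ^ p) = binE q L n (fun x => x ^ p) +
      q * (L ^ p + ∑ a ∈ Finset.Ico 1 p, (p.choose a : ℝ) * L ^ (p - a) * binE q L n (fun x => x ^ a)) := by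
  have : (fun x : ℝ => (x + L) ^ p) = fun x => x ^ p + (L ^ p * 1 +
      ∑ a ∈ Finset.Ico 1 p, ((p.choose a : ℝ) * L ^ (p - a)) * x ^ a) := by
    funext x
    rw [add_pow, Finset.sum_range_succ, Finset.range_eq_Ico, Finset.sum_eq_sum_Ico_succ_bot (by omega)]
    simp only [Nat.sub_self, Nat.sub_zero, pow_zero, Nat.choose_self, Nat.choose_zero_right, Nat.cast_one]
    rw [Finset.sum_congr rfl (fun a _ => by ring : ∀ a ∈ Finset.Ico (0+1) p, x ^ a * L ^ (p - a) * (p.choose a : ℝ) = ((p.choose a : ℝ) * L ^ (p - a)) * x ^ a)]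
    ring
  simp only [binE, this, binE_add, binE_sum, binE_smul, binE_one]
  ring

/-- truncated exponential series bound -/
theorem binE_trunc (q L θ : ℝ) (hq : 0 ≤ q) (hq1 : q ≤ 1) (hL : 0 ≤ L) (hθ : 0 ≤ θ) (n N : ℕ) :
    ∑ p ∈ Finset.range N, θ ^ (p+1) / (p+1).factorial * binE q L n (fun x => x ^ (p+1)) ≤
      Real.exp (n * (q * (Real.exp (θ * L) - 1))) := by
  calc _ = binE q L n (fun x => ∑ p ∈ Finset.range N, θ ^ (p+1) / (p+1).factorial * x ^ (p+1)) := by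
        simp only [binE_sum, binE_smul]
    _ ≤ binE q L n (fun x => Real.exp (θ * x)) := by
        apply binE_mono q L hq hq1 hL
        intro x hx
        have h := Real.sum_le_exp_of_nonneg (mul_nonneg hθ hx) (N+1)
        rw [Finset.sum_range_succ'] at h
        simp only [mul_pow, pow_zero, Nat.factorial_zero, Nat.cast_one] at h
        have e : ∀ p, θ ^ (p+1) / ((p+1).factorial : ℝ) * x ^ (p+1) = θ ^ (p+1) * x ^ (p+1) / ((p+1).factorial : ℝ) := fun p => by ring
        simp only [e]
        linarith
    _ ≤ _ := by
        rw [binE_exp, Real.exp_nat_mul]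
        have : 0 ≤ q * (Real.exp (θ * L) - 1) := mul_nonneg hq (by have := Real.one_le_exp (mul_nonneg hθ hL); linarith)
        exact pow_le_pow_left₀ (by linarith) (by linarith [Real.add_one_le_exp (q * (Real.exp (θ * L) - 1))]) n

/-- Weighted Chebyshev. -/
theorem cheb {ι : Type*} (s : Finset ι) (w f g : ι → ℝ) (hw : ∀ i, 0 ≤ w i)
    (hfg : ∀ i j, 0 ≤ (f i - f j) * (g i - g j)) :
    (∑ i ∈ s, w i * f i) * (∑ i ∈ s, w i * g i) ≤ (∑ i ∈ s, w i) * ∑ i ∈ s, w i * (f i * g i) := by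
  have h : 0 ≤ ∑ i ∈ s, ∑ j ∈ s, w i * w j * ((f i - f j) * (g i - g j)) :=
    Finset.sum_nonneg fun i _ => Finset.sum_nonneg fun j _ =>
      mul_nonneg (mul_nonneg (hw i) (hw j)) (hfg i j)
  have e : ∑ i ∈ s, ∑ j ∈ s, w i * w j * ((f i - f j) * (g i - g j))
      = (∑ i ∈ s, w i * (f i * g i)) * (∑ i ∈ s, w i) + (∑ i ∈ s, w i) * (∑ i ∈ s, w i * (f i * g i))
        - (∑ i ∈ s, w i * f i) * (∑ i ∈ s, w i * g i) - (∑ i ∈ s, w i * g i) * (∑ i ∈ s, w i * f i) := by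
    simp only [Finset.sum_mul_sum, ← Finset.sum_add_distrib, ← Finset.sum_sub_distrib]
    refine Finset.sum_congr rfl fun i _ => Finset.sum_congr rfl fun j _ => by ring
  nlinarith

theorem mixed_moment {D : ℕ} (S : Matrix (Fin D) (Fin D) ℝ) (v w d : Fin D → ℝ) (L : ℝ)
    (hw : ∀ i, 0 ≤ w i) (hd : ∀ i, 0 ≤ d i) (hL : v ⬝ᵥ v ≤ L)
    (hr : ∀ a : ℕ, v ⬝ᵥ ((S ^ a) *ᵥ v) = ∑ i, w i * d i ^ a) (j : ℕ) :
    ∀ a, v ⬝ᵥ ((S ^ a * (S + vecMulVec v v) ^ j) *ᵥ v) ≤ ∑ i, w i * (d i ^ a * (d i + L) ^ j) := by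
  have hL0 : 0 ≤ L := le_trans (by simpa using dotProduct_star_self_nonneg v) hL
  have hw1 : ∑ i, w i = v ⬝ᵥ v := by simpa using (hr 0).symm
  induction j with
  | zero => intro a; simp [hr]
  | succ j ih =>
    intro a
    have e : v ⬝ᵥ ((S ^ a * (S + vecMulVec v v) ^ (j+1)) *ᵥ v)
        = v ⬝ᵥ ((S ^ (a+1) * (S + vecMulVec v v) ^ j) *ᵥ v)
          + (v ⬝ᵥ ((S ^ a) *ᵥ v)) * (v ⬝ᵥ ((S ^ 0 * (S + vecMulVec v v) ^ j) *ᵥ v)) := by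
      rw [pow_succ' (S + vecMulVec v v), ← mul_assoc, mul_add, add_mul, add_mulVec, dotProduct_add,
        ← pow_succ, pow_zero, one_mul]
      congr 1
      rw [← mulVec_mulVec, ← mulVec_mulVec, vecMulVec_mulVec, mulVec_smul, dotProduct_smul]
      simp
    rw [e, hr a]
    have h0 := ih 0
    have h1 := ih (a+1)
    have hA : 0 ≤ ∑ i, w i * d i ^ a := Finset.sum_nonneg fun i _ => mul_nonneg (hw i) (pow_nonneg (hd i) a)
    have hB : 0 ≤ ∑ i, w i * (d i ^ a * (d i + L) ^ j) := Finset.sum_nonneg fun i _ =>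
      mul_nonneg (hw i) (mul_nonneg (pow_nonneg (hd i) a) (pow_nonneg (add_nonneg (hd i) hL0) _))
    have hc := cheb Finset.univ w (fun i => d i ^ a) (fun i => (d i + L) ^ j) hw (by
      intro x y
      rcases le_total (d x) (d y) with h | h
      · exact mul_nonneg_of_nonpos_of_nonpos
          (sub_nonpos.2 (pow_le_pow_left₀ (hd x) h a))
          (sub_nonpos.2 (pow_le_pow_left₀ (add_nonneg (hd x) hL0) (by linarith) j))
      · exact mul_nonneg
          (sub_nonneg.2 (pow_le_pow_left₀ (hd y) h a))
          (sub_nonneg.2 (pow_le_pow_left₀ (add_nonneg (hd y) hL0) (by linarith) j)))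
    simp only [pow_zero, one_mul] at h0
    calc _ ≤ ∑ i, w i * (d i ^ (a+1) * (d i + L) ^ j) + (∑ i, w i * d i ^ a) * ∑ i, w i * (d i + L) ^ j := by
            simp only [pow_zero, one_mul]
            exact add_le_add h1 (mul_le_mul_of_nonneg_left h0 hA)
      _ ≤ ∑ i, w i * (d i ^ (a+1) * (d i + L) ^ j) + L * ∑ i, w i * (d i ^ a * (d i + L) ^ j) := by
            refine add_le_add le_rfl (hc.trans ?_)
            rw [hw1]
            exact mul_le_mul_of_nonneg_right hL hB
      _ = _ := by
            rw [Finset.mul_sum, ← Finset.sum_add_distrib]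
            exact Finset.sum_congr rfl fun i _ => by ring

theorem trace_step {D : ℕ} (S : Matrix (Fin D) (Fin D) ℝ) (v w d : Fin D → ℝ) (L : ℝ)
    (hw : ∀ i, 0 ≤ w i) (hd : ∀ i, 0 ≤ d i) (hL : v ⬝ᵥ v ≤ L) (hL0 : 0 < L)
    (hr : ∀ a : ℕ, v ⬝ᵥ ((S ^ a) *ᵥ v) = ∑ i, w i * d i ^ a) (j : ℕ) :
    ∀ a, (S ^ a * (S + vecMulVec v v) ^ j).trace ≤
      (S ^ (a + j)).trace + ∑ i, w i * ((d i ^ a * (d i + L) ^ j - d i ^ (a + j)) / L) := by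
  induction j with
  | zero => intro a; simp
  | succ j ih =>
    intro a
    have e : (S ^ a * (S + vecMulVec v v) ^ (j+1)).trace
        = (S ^ (a+1) * (S + vecMulVec v v) ^ j).trace
          + v ⬝ᵥ ((S ^ a * (S + vecMulVec v v) ^ j) *ᵥ v) := by
      rw [pow_succ (S + vecMulVec v v), ← mul_assoc, mul_add, trace_add, mul_vecMulVec, trace_vecMulVec,
        Matrix.trace_mul_comm _ S, ← mul_assoc, ← pow_succ', dotProduct_comm]
    rw [e]
    have h1 := ih (a+1)
    have h2 := mixed_moment S v w d L hw hd hL hr j a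
    refine (add_le_add h1 h2).trans (le_of_eq ?_)
    rw [show a + 1 + j = a + (j+1) by ring, add_assoc, ← Finset.sum_add_distrib]
    congr 1
    refine Finset.sum_congr rfl fun i _ => ?_
    field_simp
    ring

theorem trace_update {D : ℕ} (S : Matrix (Fin D) (Fin D) ℝ) (hS : S.PosSemidef) (v : Fin D → ℝ) (L : ℝ)
    (hL : v ⬝ᵥ v ≤ L) (hL0 : 0 < L) (p : ℕ) :
    ((S + vecMulVec v v) ^ p).trace ≤
      (S ^ p).trace + ∑ a ∈ Finset.range p, (p.choose a : ℝ) * L ^ (p - a) / L * (v ⬝ᵥ ((S ^ a) *ᵥ v)) := by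
  obtain ⟨w, d, hw, hd, hr⟩ := spec_rep S hS v
  have h := trace_step S v w d L hw hd hL hL0 hr p 0
  simp only [pow_zero, one_mul, zero_add] at h
  refine h.trans (le_of_eq ?_)
  congr 1
  simp only [hr, Finset.mul_sum]
  rw [Finset.sum_comm]
  refine Finset.sum_congr rfl fun i _ => ?_
  rw [add_pow, Finset.sum_range_succ]
  simp only [Nat.sub_self, pow_zero, Nat.choose_self, Nat.cast_one, mul_one, add_sub_cancel_right]
  rw [Finset.sum_div, Finset.mul_sum]
  refine Finset.sum_congr rfl fun a _ => by ring

/-- bounded measurable -/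
def BdMeas {Ω : Type*} [MeasurableSpace Ω] (f : Ω → ℝ) : Prop :=
  Measurable f ∧ ∃ C, ∀ x, |f x| ≤ C

namespace BdMeas
variable {Ω : Type*} [MeasurableSpace Ω]

theorem const (c : ℝ) : BdMeas (fun _ : Ω => c) := ⟨measurable_const, |c|, fun _ => le_rfl⟩

theorem add {f g : Ω → ℝ} (hf : BdMeas f) (hg : BdMeas g) : BdMeas (fun x => f x + g x) := by
  obtain ⟨hf, C, hC⟩ := hf
  obtain ⟨hg, C', hC'⟩ := hg
  exact ⟨hf.add hg, C + C', fun x => (abs_add_le _ _).trans (add_le_add (hC x) (hC' x))⟩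

theorem mul {f g : Ω → ℝ} (hf : BdMeas f) (hg : BdMeas g) : BdMeas (fun x => f x * g x) := by
  obtain ⟨hf, C, hC⟩ := hf
  obtain ⟨hg, C', hC'⟩ := hg
  refine ⟨hf.mul hg, C * C', fun x => ?_⟩
  rw [abs_mul]
  exact mul_le_mul (hC x) (hC' x) (abs_nonneg _) ((abs_nonneg _).trans (hC x))

theorem sum {ι : Type*} (s : Finset ι) {f : ι → Ω → ℝ} (hf : ∀ i, BdMeas (f i)) :
    BdMeas (fun x => ∑ i ∈ s, f i x) := by
  classical
  induction s using Finset.induction_on with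
  | empty => simpa using const (Ω := Ω) 0
  | insert a s ha ih => simp only [Finset.sum_insert ha]; exact (hf a).add ih

theorem comp {Ω' : Type*} [MeasurableSpace Ω'] {f : Ω → ℝ} (hf : BdMeas f) {g : Ω' → Ω} (hg : Measurable g) :
    BdMeas (fun x => f (g x)) :=
  ⟨hf.1.comp hg, hf.2.imp fun _ h _ => h _⟩

theorem integrable {f : Ω → ℝ} (hf : BdMeas f) (μ : Measure Ω) [IsFiniteMeasure μ] : Integrable f μ := by
  obtain ⟨hf, C, hC⟩ := hf
  exact Integrable.of_bound hf.aestronglyMeasurable C (Eventually.of_forall hC)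

theorem matrix_pow {D : ℕ} {A : Ω → Matrix (Fin D) (Fin D) ℝ} (hA : ∀ i j, BdMeas fun x => A x i j)
    (p : ℕ) : ∀ i j, BdMeas fun x => (A x ^ p) i j := by
  induction p with
  | zero => intro i j; simpa using const (Ω := Ω) ((1 : Matrix (Fin D) (Fin D) ℝ) i j)
  | succ p ih =>
    intro i j
    simp only [pow_succ, Matrix.mul_apply]
    exact sum _ fun k => (ih i k).mul (hA k j)

end BdMeas

section core

def gramS {D n : ℕ} (v : 𝒳 → Fin D → ℝ) (X : Fin n → 𝒳) : Matrix (Fin D) (Fin D) ℝ :=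
  ∑ j, vecMulVec (v (X j)) (v (X j))

theorem gramS_psd {D n : ℕ} (v : 𝒳 → Fin D → ℝ) (X : Fin n → 𝒳) : (gramS v X).PosSemidef := by
  refine Matrix.posSemidef_sum _ fun j _ => ?_
  simpa using posSemidef_vecMulVec_self_star (v (X j))

theorem gramS_succ {D n : ℕ} (v : 𝒳 → Fin D → ℝ) (X : Fin (n+1) → 𝒳) :
    gramS v X = gramS v (fun j : Fin n => X j.succ) + vecMulVec (v (X 0)) (v (X 0)) := by
  simp [gramS, Fin.sum_univ_succ, add_comm]

variable [MeasurableSpace 𝒳]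

theorem v_bd {D : ℕ} {v : 𝒳 → Fin D → ℝ} {L : ℝ} (hm : ∀ i, Measurable fun x => v x i)
    (hb : ∀ x, v x ⬝ᵥ v x ≤ L) (i : Fin D) : BdMeas fun x => v x i := by
  refine ⟨hm i, L + 1, fun x => ?_⟩
  have h1 : v x i * v x i ≤ v x ⬝ᵥ v x :=
    Finset.single_le_sum (f := fun i => v x i * v x i) (fun i _ => mul_self_nonneg _) (Finset.mem_univ i)
  have h2 := hb x
  rw [abs_le]
  constructor <;> nlinarith [sq_nonneg (v x i + 1), sq_nonneg (v x i - 1)]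

theorem gramS_bd {D n : ℕ} {v : 𝒳 → Fin D → ℝ} {L : ℝ} (hm : ∀ i, Measurable fun x => v x i)
    (hb : ∀ x, v x ⬝ᵥ v x ≤ L) (i j : Fin D) : BdMeas fun X : Fin n → 𝒳 => gramS v X i j := by
  simp only [gramS, Matrix.sum_apply, vecMulVec_apply]
  exact BdMeas.sum _ fun k => ((v_bd hm hb i).comp (measurable_pi_apply k)).mul
    ((v_bd hm hb j).comp (measurable_pi_apply k))

theorem trace_bd {D n : ℕ} {v : 𝒳 → Fin D → ℝ} {L : ℝ} (hm : ∀ i, Measurable fun x => v x i)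
    (hb : ∀ x, v x ⬝ᵥ v x ≤ L) (p : ℕ) : BdMeas fun X : Fin n → 𝒳 => (gramS v X ^ p).trace := by
  simp only [Matrix.trace, Matrix.diag]
  exact BdMeas.sum _ fun i => BdMeas.matrix_pow (gramS_bd hm hb) p i i

theorem quad_integral {D n : ℕ} (μ : Measure 𝒳) [IsProbabilityMeasure μ] {v : 𝒳 → Fin D → ℝ} {L : ℝ}
    (hm : ∀ i, Measurable fun x => v x i)
    (hb : ∀ x, v x ⬝ᵥ v x ≤ L) (l : Fin D → ℝ)
    (hcov : ∀ i j, ∫ x, v x i * v x j ∂μ = if i = j then l i else 0) (a : ℕ) :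
    BdMeas (fun z : 𝒳 × (Fin n → 𝒳) => v z.1 ⬝ᵥ ((gramS v z.2 ^ a) *ᵥ v z.1)) ∧
    ∫ z, v z.1 ⬝ᵥ ((gramS v z.2 ^ a) *ᵥ v z.1) ∂(μ.prod (Measure.pi fun _ : Fin n => μ)) =
      ∑ i, l i * ∫ Y, (gramS v Y ^ a) i i ∂(Measure.pi fun _ : Fin n => μ) := by
  have e : (fun z : 𝒳 × (Fin n → 𝒳) => v z.1 ⬝ᵥ ((gramS v z.2 ^ a) *ᵥ v z.1)) =
      fun z => ∑ i, ∑ j, (v z.1 i * v z.1 j) * (gramS v z.2 ^ a) i j := by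
    funext z
    simp only [dotProduct, mulVec, Finset.mul_sum]
    exact Finset.sum_congr rfl fun i _ => Finset.sum_congr rfl fun j _ => by ring
  have hB : ∀ i j, BdMeas (fun z : 𝒳 × (Fin n → 𝒳) => (v z.1 i * v z.1 j) * (gramS v z.2 ^ a) i j) :=
    fun i j => (((v_bd hm hb i).mul (v_bd hm hb j)).comp measurable_fst).mul
      ((BdMeas.matrix_pow (gramS_bd hm hb) a i j).comp measurable_snd)
  refine ⟨by rw [e]; exact BdMeas.sum _ fun i => BdMeas.sum _ fun j => hB i j, ?_⟩
  rw [e, integral_finsetSum _ fun i _ => (BdMeas.sum _ fun j => hB i j).integrable _]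
  refine Finset.sum_congr rfl fun i _ => ?_
  rw [integral_finsetSum _ fun j _ => (hB i j).integrable _]
  have : ∀ j, ∫ z, (v z.1 i * v z.1 j) * (gramS v z.2 ^ a) i j ∂(μ.prod (Measure.pi fun _ : Fin n => μ))
      = (if i = j then l i else 0) * ∫ Y, (gramS v Y ^ a) i j ∂(Measure.pi fun _ : Fin n => μ) := by
    intro j
    rw [← hcov i j]
    exact integral_prod_mul (fun x => v x i * v x j) (fun Y : Fin n → 𝒳 => (gramS v Y ^ a) i j)
  simp only [this, ite_mul, zero_mul, Finset.sum_ite_eq, Finset.mem_univ, if_true]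

theorem core_moment {D : ℕ} (μ : Measure 𝒳) [IsProbabilityMeasure μ] {v : 𝒳 → Fin D → ℝ} {L lm t : ℝ}
    (hm : ∀ i, Measurable fun x => v x i)
    (hb : ∀ x, v x ⬝ᵥ v x ≤ L) (l : Fin D → ℝ) (hL : 0 < L) (hlm : 0 < lm)
    (hl : ∀ i, l i ≤ lm) (hlt : ∑ i, l i ≤ t)
    (hcov : ∀ i j, ∫ x, v x i * v x j ∂μ = if i = j then l i else 0) (n : ℕ) :
    ∀ p, 1 ≤ p → ∫ X, (gramS v X ^ p).trace ∂(Measure.pi fun _ : Fin n => μ) ≤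
      t / lm * binE (lm / L) L n (fun x => x ^ p) := by
  induction n with
  | zero =>
    intro p hp
    have : ∀ X : Fin 0 → 𝒳, (gramS v X ^ p).trace = 0 := by
      intro X; simp [gramS, zero_pow (by omega : p ≠ 0)]
    simp [this, binE, zero_pow (by omega : p ≠ 0)]
  | succ n ih =>
    intro p hp
    have e1 : ∫ X, (gramS v X ^ p).trace ∂(Measure.pi fun _ : Fin (n+1) => μ)
        = ∫ z, ((gramS v z.2 + vecMulVec (v z.1) (v z.1)) ^ p).trace ∂(μ.prod (Measure.pi fun _ : Fin n => μ)) := by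
      rw [← ((measurePreserving_piFinSuccAbove (fun _ : Fin (n+1) => μ) 0).symm).integral_comp']
      refine integral_congr_ae (Eventually.of_forall fun z => ?_)
      simp [gramS_succ, MeasurableEquiv.piFinSuccAbove_symm_apply, Fin.insertNthEquiv]
    set P := μ.prod (Measure.pi fun _ : Fin n => μ) with hP
    set Q := Measure.pi fun _ : Fin n => μ with hQ
    have hq := fun a => quad_integral (n := n) μ hm hb l hcov a
    have hi1 : Integrable (fun z : 𝒳 × (Fin n → 𝒳) => (gramS v z.2 ^ p).trace) P :=
      ((trace_bd hm hb p).comp measurable_snd).integrable _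
    have hi2 : ∀ a, Integrable (fun z : 𝒳 × (Fin n → 𝒳) => (p.choose a : ℝ) * L ^ (p - a) / L * (v z.1 ⬝ᵥ ((gramS v z.2 ^ a) *ᵥ v z.1))) P :=
      fun a => ((hq a).1.integrable _).const_mul _
    have hi3 : Integrable (fun z : 𝒳 × (Fin n → 𝒳) => ((gramS v z.2 + vecMulVec (v z.1) (v z.1)) ^ p).trace) P := by
      refine BdMeas.integrable ?_ _
      simp only [Matrix.trace, Matrix.diag]
      refine BdMeas.sum _ fun i => BdMeas.matrix_pow (fun i j => ?_) p i i
      simp only [Matrix.add_apply, vecMulVec_apply]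
      exact ((gramS_bd hm hb i j).comp measurable_snd).add
        (((v_bd hm hb i).mul (v_bd hm hb j)).comp measurable_fst)
    have s1 : ∫ z, ((gramS v z.2 + vecMulVec (v z.1) (v z.1)) ^ p).trace ∂P ≤
        ∫ z, ((gramS v z.2 ^ p).trace + ∑ a ∈ Finset.range p, (p.choose a : ℝ) * L ^ (p - a) / L * (v z.1 ⬝ᵥ ((gramS v z.2 ^ a) *ᵥ v z.1))) ∂P := by
      refine integral_mono hi3 (hi1.add (integrable_finsetSum _ fun a _ => hi2 a)) fun z => ?_
      exact trace_update _ (gramS_psd v z.2) _ L (hb _) hL p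
    rw [integral_add hi1 (integrable_finsetSum _ fun a _ => hi2 a), integral_finsetSum _ fun a _ => hi2 a] at s1
    have e2 : ∫ z : 𝒳 × (Fin n → 𝒳), (gramS v z.2 ^ p).trace ∂P = ∫ Y, (gramS v Y ^ p).trace ∂Q := by
      rw [hP, integral_fun_snd (μ := μ) (fun Y : Fin n → 𝒳 => (gramS v Y ^ p).trace)]
      simp
    have hQa : ∀ a, ∫ z : 𝒳 × (Fin n → 𝒳), (p.choose a : ℝ) * L ^ (p - a) / L * (v z.1 ⬝ᵥ ((gramS v z.2 ^ a) *ᵥ v z.1)) ∂P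
        = (p.choose a : ℝ) * L ^ (p - a) / L * ∑ i, l i * ∫ Y, (gramS v Y ^ a) i i ∂Q := by
      intro a; rw [integral_const_mul, (hq a).2]
    have hdiag : ∀ a i, 0 ≤ ∫ Y, (gramS v Y ^ a) i i ∂Q := fun a i =>
      integral_nonneg fun Y => ((gramS_psd v Y).pow a).diag_nonneg
    have htr : ∀ a, ∫ Y, (gramS v Y ^ a).trace ∂Q = ∑ i, ∫ Y, (gramS v Y ^ a) i i ∂Q := by
      intro a
      simp only [Matrix.trace, Matrix.diag]
      exact integral_finsetSum _ fun i _ => (BdMeas.matrix_pow (gramS_bd hm hb) a i i).integrable _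
    have hle : ∀ a, 1 ≤ a → ∑ i, l i * ∫ Y, (gramS v Y ^ a) i i ∂Q ≤ t * binE (lm / L) L n (fun x => x ^ a) := by
      intro a ha
      calc _ ≤ ∑ i, lm * ∫ Y, (gramS v Y ^ a) i i ∂Q :=
            Finset.sum_le_sum fun i _ => mul_le_mul_of_nonneg_right (hl i) (hdiag a i)
        _ = lm * ∫ Y, (gramS v Y ^ a).trace ∂Q := by rw [htr, Finset.mul_sum]
        _ ≤ lm * (t / lm * binE (lm / L) L n (fun x => x ^ a)) := mul_le_mul_of_nonneg_left (ih a ha) hlm.le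
        _ = _ := by field_simp
    rw [e1]
    refine s1.trans ?_
    rw [e2, Finset.sum_congr rfl fun a _ => hQa a, Finset.range_eq_Ico, Finset.sum_eq_sum_Ico_succ_bot (by omega),
      binE_pow_succ _ _ _ _ hp]
    have z0 : ∑ i, l i * ∫ Y, (gramS v Y ^ 0) i i ∂Q ≤ t := by simpa [hQ] using hlt
    have z1 : (p.choose 0 : ℝ) * L ^ (p - 0) / L * ∑ i, l i * ∫ Y, (gramS v Y ^ 0) i i ∂Q ≤ L ^ p / L * t := by
      simp only [Nat.choose_zero_right, Nat.cast_one, one_mul, Nat.sub_zero]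
      exact mul_le_mul_of_nonneg_left z0 (by positivity)
    have z2 : ∑ a ∈ Finset.Ico (0+1) p, (p.choose a : ℝ) * L ^ (p - a) / L * ∑ i, l i * ∫ Y, (gramS v Y ^ a) i i ∂Q ≤
        ∑ a ∈ Finset.Ico 1 p, (p.choose a : ℝ) * L ^ (p - a) / L * (t * binE (lm / L) L n (fun x => x ^ a)) := by
      refine Finset.sum_le_sum fun a ha => mul_le_mul_of_nonneg_left (hle a ?_) (by positivity)
      simpa using (Finset.mem_Ico.1 ha).1
    refine (add_le_add (ih p hp) (add_le_add z1 z2)).trans (le_of_eq ?_)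
    rw [mul_add (t / lm), ← mul_assoc (t / lm), show t / lm * (lm / L) = t / L by field_simp, mul_add (t / L),
      Finset.mul_sum]
    congr 2
    · ring
    · exact Finset.sum_congr rfl fun a _ => by ring

end core

section final

theorem trace_gram_pow {n D : ℕ} (A : Matrix (Fin n) (Fin D) ℝ) (p : ℕ) :
    ((A * Aᵀ) ^ (p+1)).trace = ((Aᵀ * A) ^ (p+1)).trace := by
  have : (A * Aᵀ) ^ (p+1) = A * (Aᵀ * A) ^ p * Aᵀ := by
    induction p with
    | zero => simp
    | succ p ih => rw [pow_succ, ih, pow_succ]; simp only [Matrix.mul_assoc]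
  rw [this, Matrix.mul_assoc, Matrix.trace_mul_comm, Matrix.mul_assoc, ← pow_succ]

theorem eigval_pow_le_trace {n : ℕ} (hn : 1 ≤ n) (M : Matrix (Fin n) (Fin n) ℝ) (hM : M.PosSemidef) :
    0 ≤ eigval M 1 ∧ ∀ p : ℕ, eigval M 1 ^ p ≤ (M ^ p).trace := by
  have h1 : (1 - 1 : ℕ) < n := by omega
  have e : ∃ i, eigval M 1 = hM.1.eigenvalues i := by
    refine ⟨(Tuple.sort hM.1.eigenvalues) (Fin.rev ⟨1 - 1, h1⟩), ?_⟩
    unfold eigval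
    rw [dif_pos hM.1, dif_pos h1]
    rfl
  obtain ⟨i, hi⟩ := e
  rw [hi]
  refine ⟨hM.eigenvalues_nonneg i, fun p => ?_⟩
  rw [spec_trace M hM.1 p]
  exact Finset.single_le_sum (f := fun i => hM.1.eigenvalues i ^ p)
    (fun i _ => pow_nonneg (hM.eigenvalues_nonneg i) p) (Finset.mem_univ i)

/-- truncated exponential trace -/
def fTr (θ : ℝ) (N : ℕ) {m : ℕ} (M : Matrix (Fin m) (Fin m) ℝ) : ℝ :=
  ∑ p ∈ Finset.range N, θ ^ (p+1) / (p+1).factorial * (M ^ (p+1)).trace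

theorem fTr_cont (θ : ℝ) (N m : ℕ) : Continuous (fun M : Matrix (Fin m) (Fin m) ℝ => fTr θ N M) := by
  unfold fTr
  refine continuous_finsetSum _ fun p _ => continuous_const.mul ?_
  exact (continuous_pow (p+1)).matrix_trace

variable [MeasurableSpace 𝒳]

theorem abstract_tail (μ : Measure 𝒳) [IsProbabilityMeasure μ] (V : ℕ → 𝒳 → ℝ) (l : ℕ → ℝ)
    {L lm t : ℝ} (hm : ∀ i, Measurable (V i)) (hb : ∀ x D, ∑ i ∈ Finset.range D, V i x ^ 2 ≤ L)
    (hL : 0 < L) (hlm : 0 < lm) (hlL : lm ≤ L) (ht : 0 ≤ t)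
    (hl : ∀ i, l i ≤ lm) (hlt : ∀ D, ∑ i ∈ Finset.range D, l i ≤ t)
    (hcov : ∀ i j, ∫ x, V i x * V j x ∂μ = if i = j then l i else 0) (n : ℕ) (hn : 1 ≤ n)
    (T : ℝ) (hT : 0 ≤ T) (θ : ℝ) (hθ : 0 ≤ θ) (N : ℕ) :
    ENNReal.ofReal (∑ p ∈ Finset.range N, θ ^ (p+1) / (p+1).factorial * T ^ (p+1)) *
      (iid μ n {X : Fin n → 𝒳 | T / n < eigval ((n : ℝ)⁻¹ • Matrix.of fun j l => ∑' i, V i (X j) * V i (X l)) 1})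
      ≤ ENNReal.ofReal (t / lm * Real.exp (n * (lm / L * (Real.exp (θ * L) - 1)))) := by
  set K : (Fin n → 𝒳) → Matrix (Fin n) (Fin n) ℝ := fun X => Matrix.of fun j l => ∑' i, V i (X j) * V i (X l) with hK
  set KD : ℕ → (Fin n → 𝒳) → Matrix (Fin n) (Fin n) ℝ := fun D X =>
    Matrix.of fun j l => ∑ i ∈ Finset.range D, V i (X j) * V i (X l) with hKD
  have hsq : ∀ x, Summable fun i => V i x ^ 2 := fun x =>
    summable_of_sum_range_le (fun i => sq_nonneg _) (hb x)
  have hsum : ∀ x y, Summable fun i => V i x * V i y := by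
    intro x y
    refine Summable.of_norm_bounded ((hsq x).add (hsq y)) fun i => ?_
    rw [Real.norm_eq_abs, abs_le]
    constructor <;> nlinarith [sq_nonneg (V i x + V i y), sq_nonneg (V i x - V i y), sq_nonneg (V i x), sq_nonneg (V i y)]
  have hlim : ∀ X, Tendsto (fun D => KD D X) atTop (nhds (K X)) := by
    intro X
    refine tendsto_pi_nhds.2 fun j => tendsto_pi_nhds.2 fun l => ?_
    exact (hsum (X j) (X l)).hasSum.tendsto_sum_nat
  let v : (D : ℕ) → 𝒳 → Fin D → ℝ := fun D x i => V i x
  have hvm : ∀ D i, Measurable fun x => v D x i := fun D i => hm i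
  have hvb : ∀ D x, v D x ⬝ᵥ v D x ≤ L := by
    intro D x
    refine le_trans (le_of_eq ?_) (hb x D)
    rw [← Fin.sum_univ_eq_sum_range (fun i => V i x ^ 2) D]
    simp [dotProduct, v, sq]
  have hA : ∀ D X, ∃ A : Matrix (Fin n) (Fin D) ℝ, KD D X = A * Aᵀ ∧ gramS (v D) X = Aᵀ * A := by
    intro D X
    refine ⟨Matrix.of fun j i => V i (X j), ?_, ?_⟩
    · ext j l
      simp only [hKD, Matrix.of_apply, Matrix.mul_apply, Matrix.transpose_apply]
      exact (Fin.sum_univ_eq_sum_range (fun i => V i (X j) * V i (X l)) D).symm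
    · ext j l
      simp only [gramS, Matrix.sum_apply, vecMulVec_apply, Matrix.of_apply, Matrix.mul_apply, Matrix.transpose_apply, v]
  have hpsdD : ∀ D X, (KD D X).PosSemidef := by
    intro D X
    obtain ⟨A, h, -⟩ := hA D X
    rw [h]
    simpa using Matrix.posSemidef_self_mul_conjTranspose A
  have hpsd : ∀ X, (K X).PosSemidef := by
    intro X
    refine Matrix.PosSemidef.of_dotProduct_mulVec_nonneg ?_ fun u => ?_
    · ext j l
      simp [hK, Matrix.conjTranspose_apply, mul_comm]
    · have hc : Continuous fun M : Matrix (Fin n) (Fin n) ℝ => star u ⬝ᵥ (M *ᵥ u) :=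
        continuous_const.dotProduct (continuous_id.matrix_mulVec continuous_const)
      exact ge_of_tendsto' ((hc.tendsto _).comp (hlim X)) fun D => (hpsdD D X).dotProduct_mulVec_nonneg u
  have htr : ∀ D X, fTr θ N (KD D X) = fTr θ N (gramS (v D) X) := by
    intro D X
    obtain ⟨A, h, h'⟩ := hA D X
    rw [h, h']
    exact Finset.sum_congr rfl fun p _ => by rw [trace_gram_pow]
  have hbd : ∀ D, BdMeas fun X : Fin n → 𝒳 => fTr θ N (gramS (v D) X) := fun D =>
    BdMeas.sum _ fun p => (BdMeas.const _).mul (trace_bd (hvm D) (hvb D) (p+1))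
  have hq : 0 ≤ lm / L := by positivity
  have hq1 : lm / L ≤ 1 := (div_le_one hL).2 hlL
  have hIntg : ∀ D, ∫ X, fTr θ N (gramS (v D) X) ∂(iid μ n) ≤
      t / lm * Real.exp (n * (lm / L * (Real.exp (θ * L) - 1))) := by
    intro D
    unfold fTr
    unfold iid
    rw [integral_finsetSum _ fun p _ => ((BdMeas.const _).mul (trace_bd (hvm D) (hvb D) (p+1))).integrable _]
    simp only [integral_const_mul]
    refine le_trans (Finset.sum_le_sum fun p _ => mul_le_mul_of_nonneg_left
      (core_moment (t := t) μ (hvm D) (hvb D) (fun i => l i) hL hlm (fun i => hl i) ?_ ?_ n (p+1) (by omega)) (by positivity)) ?_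
    · rw [Fin.sum_univ_eq_sum_range (fun i => l i) D]; exact hlt D
    · intro i j
      simpa [v, Fin.ext_iff] using hcov i j
    · refine le_trans (le_of_eq ?_) (mul_le_mul_of_nonneg_left (binE_trunc (lm / L) L θ hq hq1 hL.le hθ n N) (by positivity))
      rw [Finset.mul_sum]
      exact Finset.sum_congr rfl fun p _ => by ring
  have hnn : ∀ D (X : Fin n → 𝒳), 0 ≤ fTr θ N (gramS (v D) X) := by
    intro D X
    exact Finset.sum_nonneg fun p _ => mul_nonneg (by positivity) ((gramS_psd (v D) X).pow (p+1)).trace_nonneg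
  set g : ℕ → (Fin n → 𝒳) → ENNReal := fun D X => ENNReal.ofReal (fTr θ N (gramS (v D) X)) with hg
  have hgm : ∀ D, Measurable (g D) := fun D => (hbd D).1.ennreal_ofReal
  have hgl : ∀ X, liminf (fun D => g D X) atTop = ENNReal.ofReal (fTr θ N (K X)) := by
    intro X
    refine Tendsto.liminf_eq ?_
    simp only [hg, ← htr]
    exact ENNReal.tendsto_ofReal (((fTr_cont θ N n).tendsto _).comp (hlim X))
  have hgi : ∀ D, ∫⁻ X, g D X ∂(iid μ n) ≤ ENNReal.ofReal (t / lm * Real.exp (n * (lm / L * (Real.exp (θ * L) - 1)))) := by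
    intro D
    rw [hg]
    have hfin : IsProbabilityMeasure (iid μ n) := by unfold iid; infer_instance
    rw [← ofReal_integral_eq_lintegral_ofReal ((hbd D).integrable _) (Eventually.of_forall (hnn D))]
    exact ENNReal.ofReal_le_ofReal (hIntg D)
  have hfat : ∫⁻ X, ENNReal.ofReal (fTr θ N (K X)) ∂(iid μ n) ≤ ENNReal.ofReal (t / lm * Real.exp (n * (lm / L * (Real.exp (θ * L) - 1)))) := by
    simp only [← hgl]
    refine (lintegral_liminf_le hgm).trans ?_
    exact liminf_le_of_le (by isBoundedDefault) fun b hb => by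
      obtain ⟨D, hD⟩ := hb.exists
      exact hD.trans (hgi D)
  have hmeas : Measurable fun X => ENNReal.ofReal (fTr θ N (K X)) := by
    simp only [← hgl]
    exact Measurable.liminf hgm
  refine le_trans ?_ hfat
  refine le_trans ?_ (mul_meas_ge_le_lintegral hmeas (ENNReal.ofReal (∑ p ∈ Finset.range N, θ ^ (p+1) / (p+1).factorial * T ^ (p+1))))
  refine mul_le_mul_right (measure_mono fun X hX => ?_) _
  refine ENNReal.ofReal_le_ofReal (Finset.sum_le_sum fun p _ => mul_le_mul_of_nonneg_left ?_ (by positivity))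
  have hn0 : (0:ℝ) < n := by exact_mod_cast hn
  have hMp : ((n:ℝ)⁻¹ • K X).PosSemidef := (hpsd X).smul (by positivity)
  obtain ⟨h0, h1⟩ := eigval_pow_le_trace hn _ hMp
  have h2 := h1 (p+1)
  have hX' : T / n < eigval ((n:ℝ)⁻¹ • K X) 1 := hX
  have h3 : (T / n) ^ (p+1) ≤ eigval ((n:ℝ)⁻¹ • K X) 1 ^ (p+1) := pow_le_pow_left₀ (by positivity) hX'.le _
  have h4 := h3.trans h2
  rw [smul_pow, Matrix.trace_smul, smul_eq_mul, div_pow, inv_pow, div_eq_inv_mul] at h4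
  exact le_of_mul_le_mul_left h4 (by positivity)

theorem abstract_tail' (μ : Measure 𝒳) [IsProbabilityMeasure μ] (V : ℕ → 𝒳 → ℝ) (l : ℕ → ℝ)
    {L lm t : ℝ} (hm : ∀ i, Measurable (V i)) (hb : ∀ x D, ∑ i ∈ Finset.range D, V i x ^ 2 ≤ L)
    (hL : 0 < L) (hlm : 0 < lm) (hlL : lm ≤ L) (ht : 0 ≤ t)
    (hl : ∀ i, l i ≤ lm) (hlt : ∀ D, ∑ i ∈ Finset.range D, l i ≤ t)
    (hcov : ∀ i j, ∫ x, V i x * V j x ∂μ = if i = j then l i else 0) (n : ℕ) (hn : 1 ≤ n)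
    (T : ℝ) (hT : 0 ≤ T) (θ : ℝ) (hθ : 0 ≤ θ) :
    (Real.exp (θ * T) - 1) *
      (iid μ n {X : Fin n → 𝒳 | T / n < eigval ((n : ℝ)⁻¹ • Matrix.of fun j l => ∑' i, V i (X j) * V i (X l)) 1}).toReal
      ≤ t / lm * Real.exp (n * (lm / L * (Real.exp (θ * L) - 1))) := by
  have hfin : IsProbabilityMeasure (iid μ n) := by unfold iid; infer_instance
  set P := iid μ n {X : Fin n → 𝒳 | T / n < eigval ((n : ℝ)⁻¹ • Matrix.of fun j l => ∑' i, V i (X j) * V i (X l)) 1} with hP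
  have hS : HasSum (fun p : ℕ => θ ^ (p+1) / (p+1).factorial * T ^ (p+1)) (Real.exp (θ * T) - 1) := by
    have h := (NormedSpace.expSeries_div_hasSum_exp (𝔸 := ℝ) (θ * T))
    rw [← Real.exp_eq_exp_ℝ] at h
    have h2 := (hasSum_nat_add_iff' (f := fun p : ℕ => (θ * T) ^ p / (p.factorial : ℝ)) 1).2 h
    simp only [Finset.sum_range_one, pow_zero, Nat.factorial_zero, Nat.cast_one, div_one] at h2
    refine h2.congr_fun ?_ |> id
    intro p; rw [mul_pow]; ring
  refine le_of_tendsto (hS.tendsto_sum_nat.mul_const P.toReal) (Eventually.of_forall fun N => ?_)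
  have h := abstract_tail μ V l hm hb hL hlm hlL ht hl hlt hcov n hn T hT θ hθ N
  rw [← hP] at h
  have h5 := ENNReal.toReal_mono (by simp) h
  have hnn : 0 ≤ ∑ p ∈ Finset.range N, θ ^ (p+1) / ((p+1).factorial : ℝ) * T ^ (p+1) :=
    Finset.sum_nonneg fun p _ => by positivity
  rwa [ENNReal.toReal_mul, ENNReal.toReal_ofReal hnn, ENNReal.toReal_ofReal (by positivity)] at h5

end final

theorem numeric_tail {u P r : ℝ} (k : ℕ) (hk : 1 ≤ k) (hu : 0 ≤ u) (hr : 0 ≤ r)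
    (h : (Real.exp (4 * (u + Real.log ((k:ℝ) + 1))) - 1) * P ≤ r * Real.exp (u * (Real.exp 1 - 1))) :
    P ≤ 4 * (r / (k:ℝ) ^ 4) * Real.exp (-u) := by
  have hk0 : (1:ℝ) ≤ k := by exact_mod_cast hk
  have he : Real.exp 1 - 1 ≤ 2 := by linarith [Real.exp_one_lt_d9]
  have e1 : Real.exp (4 * (u + Real.log ((k:ℝ) + 1))) = Real.exp (4 * u) * ((k:ℝ)+1) ^ 4 := by
    rw [mul_add, Real.exp_add]
    congr 1
    rw [show (4:ℝ) * Real.log ((k:ℝ)+1) = ((4:ℕ):ℝ) * Real.log ((k:ℝ)+1) by norm_num, Real.exp_nat_mul,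
      Real.exp_log (by linarith)]
  have h4 : 1 ≤ Real.exp (4 * u) := Real.one_le_exp (by linarith)
  have hkk : (k:ℝ)^4 + 1 ≤ ((k:ℝ)+1)^4 := by nlinarith [pow_pos (show (0:ℝ) < k by linarith) 3, pow_pos (show (0:ℝ) < k by linarith) 2]
  have hk4 : 0 < (k:ℝ)^4 := by positivity
  have hlow : Real.exp (4 * u) * (k:ℝ)^4 ≤ Real.exp (4 * (u + Real.log ((k:ℝ) + 1))) - 1 := by
    rw [e1]; nlinarith
  by_cases hP : P ≤ 0
  · exact hP.trans (by positivity)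
  push Not at hP
  have h5 : Real.exp (4 * u) * (k:ℝ)^4 * P ≤ r * Real.exp (2 * u) := by
    refine (mul_le_mul_of_nonneg_right hlow hP.le).trans (h.trans ?_)
    exact mul_le_mul_of_nonneg_left (Real.exp_le_exp.2 (by nlinarith)) hr
  have h6 : P ≤ r / (k:ℝ)^4 * Real.exp (-(2*u)) := by
    have : r / (k:ℝ)^4 * Real.exp (-(2*u)) = r * Real.exp (2*u) / (Real.exp (4 * u) * (k:ℝ)^4) := by
      rw [show 4 * u = 2 * u + 2 * u by ring, Real.exp_add, Real.exp_neg]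
      field_simp
    rw [this, le_div_iff₀ (by positivity)]
    linarith
  have h7 : Real.exp (-(2*u)) ≤ Real.exp (-u) := Real.exp_le_exp.2 (by linarith)
  have h8 : 0 ≤ r / (k:ℝ)^4 := by positivity
  have h9 := Real.exp_pos (-u)
  nlinarith [mul_le_mul_of_nonneg_left h7 h8, mul_nonneg h8 h9.le]

theorem tail_kernel_matrix_top_eigenvalue :
    ∃ c : ℝ, 0 < c ∧ ∃ c' : ℝ, 0 < c' ∧
      ∀ (𝒳 : Type u) [MeasurableSpace 𝒳] (μ : Measure 𝒳) [IsProbabilityMeasure μ]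
        (lam : ℕ → ℝ) (ψ : ℕ → 𝒳 → ℝ),
        (∀ i, 0 ≤ lam i) → Summable lam →
        OrthonormalFamily μ ψ →
        (∀ i j : ℕ, i ≤ j → lam j ≤ lam i) →
        (∀ k, BetaFinite μ lam ψ k) →
        RegularityAssumption μ lam ψ →
        ∀ n k : ℕ, 1 ≤ n → 1 ≤ k →
          ENNReal.ofReal
              (1 - 4 * (rEff lam k / (k : ℝ) ^ 4) *
                Real.exp (-(c' / betaQ μ lam ψ k) * ((n : ℝ) / rEff lam k))) ≤
            iid μ n {X : Fin n → 𝒳 |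
              eigval ((n : ℝ)⁻¹ • kerMatGT lam ψ k X) 1 ≤
                c * (lam k +
                  betaQ μ lam ψ k * Real.log ((k : ℝ) + 1) * trTail lam k / (n : ℝ))} := by
  refine ⟨4, by norm_num, 1, one_pos, ?_⟩
  intro 𝒳 _ μ _ lam ψ hlam0 hlams horth hmono hbeta _ n k hn hk
  have hfin : IsProbabilityMeasure (iid μ n) := by unfold iid; infer_instance
  have hn0 : (0:ℝ) < n := by exact_mod_cast hn
  have hop : opTail lam k = lam k := by
    unfold opTail
    refine le_antisymm (ciSup_le fun i => hmono _ _ (by omega)) ?_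
    exact le_ciSup (f := fun i => lam (k + i)) ⟨lam k, by rintro _ ⟨i, rfl⟩; exact hmono _ _ (by omega)⟩ 0
  rcases (hlam0 k).eq_or_lt with h0 | hpos
  · -- degenerate case
    have hz : ∀ i, lam (k + i) = 0 := fun i =>
      le_antisymm (h0 ▸ hmono k (k+i) (by omega)) (hlam0 _)
    have hset : {X : Fin n → 𝒳 |
              eigval ((n : ℝ)⁻¹ • kerMatGT lam ψ k X) 1 ≤
                4 * (lam k +
                  betaQ μ lam ψ k * Real.log ((k : ℝ) + 1) * trTail lam k / (n : ℝ))} = Set.univ := by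
      refine Set.eq_univ_of_forall fun X => ?_
      have hK : (n : ℝ)⁻¹ • kerMatGT lam ψ k X = 0 := by
        ext j l; simp [kerMatGT, hz]
      have h := (eigval_pow_le_trace hn (0 : Matrix (Fin n) (Fin n) ℝ) Matrix.PosSemidef.zero).2 1
      simp only [Set.mem_setOf_eq, hK]
      simpa [trTail, hz, ← h0] using h
    rw [hset, measure_univ]
    refine ENNReal.ofReal_le_one.2 ?_
    simp [rEff, hop, ← h0]
  -- main case
  set t := trTail lam k with htdef
  set β := betaQ μ lam ψ k with hβdef
  have hsumt : Summable fun i => lam (k + i) := by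
    simpa [add_comm] using (summable_nat_add_iff k).2 hlams
  have htk : lam k ≤ t := by
    have h := hsumt.le_tsum 0 fun i _ => hlam0 _
    rw [htdef]; unfold trTail; simpa using h
  have htpos : 0 < t := hpos.trans_le htk
  obtain ⟨hψm, hψo⟩ := horth
  -- a.e. summability
  have hae1 : ∀ᵐ x ∂μ, Summable fun i => lam (k + i) * ψ (k + i) x ^ 2 := by
    have hIntg : ∀ i, ∫⁻ x, ENNReal.ofReal (lam (k + i) * ψ (k + i) x ^ 2) ∂μ = ENNReal.ofReal (lam (k + i)) := by
      intro i
      have hi : Integrable (fun x => lam (k + i) * ψ (k + i) x ^ 2) μ := (hψm (k+i)).integrable_sq.const_mul _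
      rw [← ofReal_integral_eq_lintegral_ofReal hi (Eventually.of_forall fun x => mul_nonneg (hlam0 _) (sq_nonneg _)),
        integral_const_mul]
      have := hψo (k+i) (k+i)
      simp only [if_true, ← sq] at this
      rw [this, mul_one]
    have hmeas : ∀ i, AEMeasurable (fun x => ENNReal.ofReal (lam (k + i) * ψ (k + i) x ^ 2)) μ := fun i =>
      (((hψm (k+i)).aestronglyMeasurable.aemeasurable.pow_const 2).const_mul _).ennreal_ofReal
    have hlt : ∫⁻ x, ∑' i, ENNReal.ofReal (lam (k + i) * ψ (k + i) x ^ 2) ∂μ ≠ ⊤ := by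
      rw [lintegral_tsum hmeas]
      simp only [hIntg]
      exact hsumt.tsum_ofReal_ne_top
    filter_upwards [ae_lt_top' (AEMeasurable.ennreal_tsum hmeas) hlt] with x hx
    refine (ENNReal.summable_toReal hx.ne).congr fun i => ?_
    exact ENNReal.toReal_ofReal (mul_nonneg (hlam0 _) (sq_nonneg _))
  have hae2 : ∀ᵐ x ∂μ, ∑' i, lam (k + i) * ψ (k + i) x ^ 2 ≤ β * t := by
    obtain ⟨C, hC⟩ := hbeta k
    have hb : ∀ᵐ x ∂μ, betaF lam ψ k x ≤ essSup (betaF lam ψ k) μ := ae_le_essSup ⟨C, by simpa using hC⟩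
    filter_upwards [hb] with x hx
    have h1 := ((le_max_right _ _).trans (le_max_left _ _)).trans hx
    exact (div_le_iff₀ htpos).1 h1
  have hae3 : ∀ᵐ x ∂μ, ∀ i, ψ i x = (hψm i).aestronglyMeasurable.mk (ψ i) x :=
    ae_all_iff.2 fun i => (hψm i).aestronglyMeasurable.ae_eq_mk
  obtain ⟨G, hGae, hGm, hG⟩ := (hae1.and (hae2.and hae3)).exists_measurable_mem
  set L := β * t with hLdef
  have hsk : lam k ≤ L := by
    have h1 : ∫ x, lam k * ψ k x ^ 2 ∂μ = lam k := by
      rw [integral_const_mul]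
      have := hψo k k
      simp only [if_true, ← sq] at this
      rw [this, mul_one]
    rw [← h1]
    calc ∫ x, lam k * ψ k x ^ 2 ∂μ ≤ ∫ x, L ∂μ := by
          refine integral_mono_ae ((hψm k).integrable_sq.const_mul _) (integrable_const _) ?_
          filter_upwards [hae1, hae2] with x hx1 hx2
          refine le_trans ?_ hx2
          simpa using hx1.le_tsum 0 fun i _ => mul_nonneg (hlam0 _) (sq_nonneg _)
      _ = L := by simp
  have hLpos : 0 < L := hpos.trans_le hsk
  have hβpos : 0 < β := by
    by_contra h
    push Not at h
    have : L ≤ 0 := mul_nonpos_of_nonpos_of_nonneg h htpos.le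
    linarith
  let V : ℕ → 𝒳 → ℝ := fun i => G.indicator fun x =>
    Real.sqrt (lam (k + i)) * (hψm (k+i)).aestronglyMeasurable.mk (ψ (k + i)) x
  have hVG : ∀ x ∈ G, ∀ i, V i x = Real.sqrt (lam (k + i)) * ψ (k + i) x := by
    intro x hx i
    simp only [V, Set.indicator_of_mem hx]
    rw [← (hG x hx).2.2]
  have hVm : ∀ i, Measurable (V i) := fun i =>
    ((hψm (k+i)).aestronglyMeasurable.stronglyMeasurable_mk.measurable.const_mul _).indicator hGm
  have hVb : ∀ x D, ∑ i ∈ Finset.range D, V i x ^ 2 ≤ L := by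
    intro x D
    by_cases hx : x ∈ G
    · refine le_trans ?_ (hG x hx).2.1
      refine le_trans (le_of_eq ?_) ((hG x hx).1.sum_le_tsum (Finset.range D) fun i _ => mul_nonneg (hlam0 _) (sq_nonneg _))
      refine Finset.sum_congr rfl fun i _ => ?_
      rw [hVG x hx, mul_pow, Real.sq_sqrt (hlam0 _)]
    · simp [V, Set.indicator_of_notMem hx, hLpos.le]
  have hcov : ∀ i j, ∫ x, V i x * V j x ∂μ = if i = j then lam (k + i) else 0 := by
    intro i j
    have : ∫ x, V i x * V j x ∂μ = ∫ x, (Real.sqrt (lam (k + i)) * Real.sqrt (lam (k + j))) * (ψ (k + i) x * ψ (k + j) x) ∂μ := by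
      refine integral_congr_ae ?_
      filter_upwards [hGae] with x hx
      rw [hVG x hx, hVG x hx]; ring
    rw [this, integral_const_mul, hψo]
    by_cases hij : i = j
    · subst hij; simp [Real.mul_self_sqrt (hlam0 _)]
    · simp [hij]
  set T := 4 * ((n:ℝ) * lam k + L * Real.log ((k:ℝ) + 1)) with hTdef
  have hlog : 0 ≤ Real.log ((k:ℝ) + 1) := Real.log_nonneg (by linarith [(Nat.cast_nonneg k : (0:ℝ) ≤ k)])
  have hT : 0 ≤ T := by positivity
  have hmain := abstract_tail' μ V (fun i => lam (k + i)) (t := t) hVm hVb hLpos hpos hsk htpos.le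
    (fun i => hmono _ _ (by omega)) (fun D => hsumt.sum_le_tsum _ fun i _ => hlam0 _) hcov n hn T hT L⁻¹ (by positivity)
  set bad := {X : Fin n → 𝒳 | T / n < eigval ((n : ℝ)⁻¹ • Matrix.of fun j l => ∑' i, V i (X j) * V i (X l)) 1} with hbad
  set good := {X : Fin n → 𝒳 |
              eigval ((n : ℝ)⁻¹ • kerMatGT lam ψ k X) 1 ≤
                4 * (lam k + β * Real.log ((k : ℝ) + 1) * t / (n : ℝ))} with hgood
  set u := (n:ℝ) * (lam k / L) with hu
  have hr : rEff lam k = t / lam k := by rw [rEff, hop]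
  have hexp : -(1 / β) * ((n:ℝ) / rEff lam k) = -u := by
    rw [hr, hu, hLdef]; field_simp
  have hP : (iid μ n bad).toReal ≤ 4 * (rEff lam k / (k:ℝ)^4) * Real.exp (-u) := by
    refine numeric_tail k hk (by positivity) (by rw [hr]; positivity) ?_
    rw [hr]
    convert hmain using 2
    · rw [hTdef, hu]; congr 2; field_simp
    · rw [hu, inv_mul_cancel₀ hLpos.ne', mul_assoc]
  have hcompl : iid μ n goodᶜ ≤ iid μ n bad := by
    have hX : ∀ᵐ X ∂(iid μ n), ∀ j, X j ∈ G := by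
      refine ae_all_iff.2 fun j => ?_
      exact (Measure.tendsto_eval_ae_ae (μ := fun _ : Fin n => μ) (i := j)).eventually hGae
    refine measure_mono_ae ?_
    filter_upwards [hX] with X hX hc
    have hKeq : kerMatGT lam ψ k X = Matrix.of fun j l => ∑' i, V i (X j) * V i (X l) := by
      ext j l
      simp only [kerMatGT, Matrix.of_apply]
      refine tsum_congr fun i => ?_
      rw [hVG _ (hX j), hVG _ (hX l)]
      calc lam (k+i) * ψ (k+i) (X j) * ψ (k+i) (X l)
          = (Real.sqrt (lam (k+i)) * Real.sqrt (lam (k+i))) * ψ (k+i) (X j) * ψ (k+i) (X l) := by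
            rw [Real.mul_self_sqrt (hlam0 (k+i))]
        _ = _ := by ring
    have hc' : ¬ (eigval ((n : ℝ)⁻¹ • kerMatGT lam ψ k X) 1 ≤
                4 * (lam k + β * Real.log ((k : ℝ) + 1) * t / (n : ℝ))) := hc
    rw [hKeq, not_le] at hc'
    change T / n < _
    refine lt_of_eq_of_lt ?_ hc'
    rw [hTdef, hLdef]; field_simp
  rw [hexp]
  have h1 : (1:ENNReal) ≤ iid μ n good + iid μ n bad := by
    calc (1:ENNReal) = iid μ n Set.univ := measure_univ.symm
      _ = iid μ n (good ∪ goodᶜ) := by rw [Set.union_compl_self]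
      _ ≤ _ := (measure_union_le _ _).trans (add_le_add le_rfl hcompl)
  have h2 : iid μ n bad ≤ ENNReal.ofReal (4 * (rEff lam k / (k:ℝ)^4) * Real.exp (-u)) := by
    rw [← ENNReal.ofReal_toReal (measure_ne_top (iid μ n) bad)]
    exact ENNReal.ofReal_le_ofReal hP
  rw [ENNReal.ofReal_sub _ (ENNReal.toReal_nonneg.trans hP), ENNReal.ofReal_one]
  exact tsub_le_iff_right.2 (h1.trans (add_le_add le_rfl h2))

end KRRPaper

end
end

section
/- Deterministic variance bound. Fix points x_1,…,x_n ∈ 𝒳 (all series below assumed to converge), k ≥ 1, γ_n ≥ 0, and suppose the matrix A_k := K_{>k} + nγ_n·I is positive definite and μ_k(ψ_{≤k}(X)^⊤ψ_{≤k}(X)) > 0. Let A := K + nγ_n·I and let M ∈ ℝ^{n×n} have entries M_{jl} := ∑_i λ_i²·ψ_i(x_j)ψ_i(x_l). Then σ_ε²·tr(A^{-1}·M·A^{-1}) ≤ σ_ε²·( μ₁(A_k^{-1})²·tr(ψ_{≤k}(X)·ψ_{≤k}(X)^⊤) / ( μ_n(A_k^{-1})²·μ_k(ψ_{≤k}(X)^⊤ψ_{≤k}(X))²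 ) + μ₁(A_k^{-1})²·∑_{j=1}^n ∑_{i>k} λ_i²·ψ_i(x_j)² ) for every σ_ε ≥ 0. -/
open MeasureTheory Matrix Filter

noncomputable section

namespace KRRPaper

universe u

variable {𝒳 : Type u}

theorem aux_quad_le {n : ℕ} {M : Matrix (Fin n) (Fin n) ℝ} (h : M.IsHermitian) (c : ℝ)
    (hc : ∀ i, h.eigenvalues i ≤ c) (x : Fin n → ℝ) : x ⬝ᵥ (M *ᵥ x) ≤ c * (x ⬝ᵥ x) := by
  have hH : (c • (1 : Matrix (Fin n) (Fin n) ℝ) - M).PosSemidef := by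
    have hU := h.spectral_theorem
    set U := h.eigenvectorUnitary
    have hD : (Matrix.diagonal (fun i => c - h.eigenvalues i)).PosSemidef :=
      Matrix.PosSemidef.diagonal (fun i => by simpa using hc i)
    have h2 := hD.mul_mul_conjTranspose_same (U : Matrix (Fin n) (Fin n) ℝ)
    have hUU : (U : Matrix (Fin n) (Fin n) ℝ) * (U : Matrix (Fin n) (Fin n) ℝ)ᴴ = 1 :=
      Matrix.mem_unitaryGroup_iff.mp U.2
    have h3 : Matrix.diagonal (fun i => c - h.eigenvalues i)
        = c • (1 : Matrix (Fin n) (Fin n) ℝ) - Matrix.diagonal h.eigenvalues := by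
      ext i j
      by_cases hij : i = j
      · subst hij; simp
      · simp [hij]
    have h4 : M = (U : Matrix (Fin n) (Fin n) ℝ) * Matrix.diagonal h.eigenvalues
        * (U : Matrix (Fin n) (Fin n) ℝ)ᴴ := by
      exact hU
    rw [h3, Matrix.mul_sub, Matrix.sub_mul, ← h4] at h2
    rw [Matrix.mul_smul, Matrix.smul_mul, Matrix.mul_one, hUU] at h2
    exact h2
  have := hH.dotProduct_mulVec_nonneg x
  simp [Matrix.sub_mulVec, Matrix.smul_mulVec, dotProduct_sub] at this
  exact this

theorem aux_le_quad {n : ℕ} {M : Matrix (Fin n) (Fin n) ℝ} (h : M.IsHermitian) (c : ℝ)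
    (hc : ∀ i, c ≤ h.eigenvalues i) (x : Fin n → ℝ) : c * (x ⬝ᵥ x) ≤ x ⬝ᵥ (M *ᵥ x) := by
  have hH : (M - c • (1 : Matrix (Fin n) (Fin n) ℝ)).PosSemidef := by
    have hU := h.spectral_theorem
    set U := h.eigenvectorUnitary
    have hD : (Matrix.diagonal (fun i => h.eigenvalues i - c)).PosSemidef :=
      Matrix.PosSemidef.diagonal (fun i => by simpa using hc i)
    have h2 := hD.mul_mul_conjTranspose_same (U : Matrix (Fin n) (Fin n) ℝ)
    have hUU : (U : Matrix (Fin n) (Fin n) ℝ) * (U : Matrix (Fin n) (Fin n) ℝ)ᴴ = 1 :=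
      Matrix.mem_unitaryGroup_iff.mp U.2
    have h3 : Matrix.diagonal (fun i => h.eigenvalues i - c)
        = Matrix.diagonal h.eigenvalues - c • (1 : Matrix (Fin n) (Fin n) ℝ) := by
      ext i j
      by_cases hij : i = j
      · subst hij; simp
      · simp [hij]
    have h4 : M = (U : Matrix (Fin n) (Fin n) ℝ) * Matrix.diagonal h.eigenvalues
        * (U : Matrix (Fin n) (Fin n) ℝ)ᴴ := by
      exact hU
    rw [h3, Matrix.mul_sub, Matrix.sub_mul, ← h4] at h2
    rw [Matrix.mul_smul, Matrix.smul_mul, Matrix.mul_one, hUU] at h2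
    exact h2
  have := hH.dotProduct_mulVec_nonneg x
  simp [Matrix.sub_mulVec, Matrix.smul_mulVec, dotProduct_sub] at this
  exact this

theorem aux_le_eigval_one {n : ℕ} {M : Matrix (Fin n) (Fin n) ℝ} (h : M.IsHermitian)
    (i : Fin n) : h.eigenvalues i ≤ eigval M 1 := by
  have hn : 1 - 1 < n := i.pos
  unfold eigval
  simp only [dif_pos h, dif_pos hn]
  have hm := Tuple.monotone_sort h.eigenvalues
  have : (Tuple.sort h.eigenvalues).symm i ≤ Fin.rev ⟨1 - 1, hn⟩ := by
    rw [Fin.le_def, Fin.val_rev]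
    have := ((Tuple.sort h.eigenvalues).symm i).2
    simp only []
    omega
  simpa using hm this

theorem aux_eigval_last_le {n : ℕ} {M : Matrix (Fin n) (Fin n) ℝ} (h : M.IsHermitian)
    (i : Fin n) : eigval M n ≤ h.eigenvalues i := by
  have hn : n - 1 < n := by have := i.pos; omega
  unfold eigval
  simp only [dif_pos h, dif_pos hn]
  have hm := Tuple.monotone_sort h.eigenvalues
  have : Fin.rev ⟨n - 1, hn⟩ ≤ (Tuple.sort h.eigenvalues).symm i := by
    rw [Fin.le_def, Fin.val_rev]
    simp only []
    omega
  simpa using hm this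

theorem aux_eigval_pos {n : ℕ} {M : Matrix (Fin n) (Fin n) ℝ} (h : M.PosDef)
    (j : ℕ) (hj : j - 1 < n) : 0 < eigval M j := by
  unfold eigval
  simp only [dif_pos h.isHermitian, dif_pos hj]
  exact h.eigenvalues_pos _

theorem aux_sq_nonneg {n : ℕ} (x : Fin n → ℝ) : 0 ≤ x ⬝ᵥ x :=
  Finset.sum_nonneg fun i _ => mul_self_nonneg _

/-- lower bound on `D` from upper bound on its inverse -/
theorem aux_inv_lower {n : ℕ} {D P : Matrix (Fin n) (Fin n) ℝ} (hP : P.PosDef)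
    (hPD : P * D = 1) (hD : D.IsHermitian) (a : ℝ) (ha : 0 < a)
    (h : ∀ x : Fin n → ℝ, x ⬝ᵥ (P *ᵥ x) ≤ a * (x ⬝ᵥ x)) (x : Fin n → ℝ) :
    x ⬝ᵥ x ≤ a * (x ⬝ᵥ (D *ᵥ x)) := by
  have h1 := hP.posSemidef.dotProduct_mulVec_nonneg (x - a • (D *ᵥ x))
  have h2 : P *ᵥ (D *ᵥ x) = x := by rw [Matrix.mulVec_mulVec, hPD, Matrix.one_mulVec]
  have h3 : (D *ᵥ x) ⬝ᵥ (P *ᵥ x) = x ⬝ᵥ x := by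
    have hPt : Pᵀ = P := hP.isHermitian
    rw [Matrix.dotProduct_mulVec, ← Matrix.mulVec_transpose, hPt, h2]
  have h4 := h x
  have h5 : (D *ᵥ x) ⬝ᵥ x = x ⬝ᵥ (D *ᵥ x) := dotProduct_comm _ _
  simp [Matrix.mulVec_sub, Matrix.mulVec_smul, h2, h3, h5] at h1
  have : 0 ≤ a * (a * (x ⬝ᵥ (D *ᵥ x)) - x ⬝ᵥ x) := by nlinarith
  have := nonneg_of_mul_nonneg_right this ha
  linarith

theorem aux_norm_inv {n : ℕ} {D : Matrix (Fin n) (Fin n) ℝ} (a : ℝ)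
    (h : ∀ x : Fin n → ℝ, x ⬝ᵥ x ≤ a * (x ⬝ᵥ (D *ᵥ x))) (x : Fin n → ℝ) :
    x ⬝ᵥ x ≤ a ^ 2 * ((D *ᵥ x) ⬝ᵥ (D *ᵥ x)) := by
  have h1 := aux_sq_nonneg (x - a • (D *ᵥ x))
  have h5 : (D *ᵥ x) ⬝ᵥ x = x ⬝ᵥ (D *ᵥ x) := dotProduct_comm _ _
  simp [h5] at h1
  nlinarith [h x]

theorem aux_u_bound {n k : ℕ} {Ak P : Matrix (Fin n) (Fin n) ℝ} (Ψ : Matrix (Fin n) (Fin k) ℝ)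
    (l : Fin k → ℝ) (hl : ∀ i, 0 ≤ l i) (hPA : P * Ak = 1) (hPt : Pᵀ = P)
    (b g : ℝ) (hb : 0 < b) (hg : 0 < g)
    (hP : ∀ x : Fin n → ℝ, b * (x ⬝ᵥ x) ≤ x ⬝ᵥ (P *ᵥ x))
    (hG : ∀ x : Fin k → ℝ, g * (x ⬝ᵥ x) ≤ x ⬝ᵥ ((Ψᵀ * Ψ) *ᵥ x))
    (v : Fin n → ℝ) (u : Fin k → ℝ) (hu : u = fun i => l i * (Ψᵀ *ᵥ v) i)
    (y : Fin n → ℝ) (hy : Ak *ᵥ v + Ψ *ᵥ u = y) :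
    (b * g) ^ 2 * (u ⬝ᵥ u) ≤ (Ψᵀ *ᵥ (P *ᵥ y)) ⬝ᵥ (Ψᵀ *ᵥ (P *ᵥ y)) := by
  have h1 : P *ᵥ y = v + P *ᵥ (Ψ *ᵥ u) := by
    rw [← hy, Matrix.mulVec_add, Matrix.mulVec_mulVec, hPA, Matrix.one_mulVec]
  have h2 : 0 ≤ u ⬝ᵥ (Ψᵀ *ᵥ v) := by
    rw [hu]
    refine Finset.sum_nonneg fun i _ => ?_
    simp only []
    nlinarith [mul_nonneg (hl i) (mul_self_nonneg ((Ψᵀ *ᵥ v) i))]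
  have h3 : u ⬝ᵥ (Ψᵀ *ᵥ (P *ᵥ (Ψ *ᵥ u))) = (Ψ *ᵥ u) ⬝ᵥ (P *ᵥ (Ψ *ᵥ u)) := by
    rw [Matrix.dotProduct_mulVec u, Matrix.vecMul_transpose]
  have h4 : u ⬝ᵥ ((Ψᵀ * Ψ) *ᵥ u) = (Ψ *ᵥ u) ⬝ᵥ (Ψ *ᵥ u) := by
    rw [← Matrix.mulVec_mulVec, Matrix.dotProduct_mulVec u, Matrix.vecMul_transpose]
  have h5 : (b * g) * (u ⬝ᵥ u) ≤ u ⬝ᵥ (Ψᵀ *ᵥ (P *ᵥ y)) := by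
    rw [h1, Matrix.mulVec_add, dotProduct_add, h3]
    have h6 := hG u
    have h7 := hP (Ψ *ᵥ u)
    rw [h4] at h6
    nlinarith [mul_le_mul_of_nonneg_left h6 hb.le]
  set w := Ψᵀ *ᵥ (P *ᵥ y)
  have h8 := aux_sq_nonneg (w - (b * g) • u)
  have h9 : w ⬝ᵥ u = u ⬝ᵥ w := dotProduct_comm _ _
  simp [h9] at h8
  nlinarith [mul_le_mul_of_nonneg_left h5 (mul_pos hb hg).le]

theorem aux_trace_tt {m n : ℕ} (B : Matrix (Fin m) (Fin n) ℝ) :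
    (B * Bᵀ).trace = ∑ i, (fun j => B i j) ⬝ᵥ (fun j => B i j) := by
  simp [Matrix.trace, Matrix.mul_apply, dotProduct]

/-- first term -/
theorem aux_first {n k : ℕ} {A Ak P Q : Matrix (Fin n) (Fin n) ℝ} (Ψ : Matrix (Fin n) (Fin k) ℝ)
    (l : Fin k → ℝ) (hl : ∀ i, 0 ≤ l i) (hPA : P * Ak = 1) (hAP : Ak * P = 1) (hPt : Pᵀ = P)
    (hAQ : A * Q = 1) (hQt : Qᵀ = Q)
    (hA : A = Ak + Ψ * Matrix.diagonal l * Ψᵀ)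
    (a b g : ℝ) (hb : 0 < b) (hg : 0 < g)
    (hP : ∀ x : Fin n → ℝ, b * (x ⬝ᵥ x) ≤ x ⬝ᵥ (P *ᵥ x))
    (hAk : ∀ x : Fin n → ℝ, x ⬝ᵥ x ≤ a ^ 2 * ((Ak *ᵥ x) ⬝ᵥ (Ak *ᵥ x)))
    (hG : ∀ x : Fin k → ℝ, g * (x ⬝ᵥ x) ≤ x ⬝ᵥ ((Ψᵀ * Ψ) *ᵥ x)) :
    (Q * (Ψ * Matrix.diagonal (fun i => l i ^ 2) * Ψᵀ) * Q).trace ≤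
      a ^ 2 * (Ψ * Ψᵀ).trace / (b ^ 2 * g ^ 2) := by
  have e1 : Q * (Ψ * Matrix.diagonal (fun i => l i ^ 2) * Ψᵀ) * Q
      = (Q * Ψ * Matrix.diagonal l) * (Q * Ψ * Matrix.diagonal l)ᵀ := by
    have : Matrix.diagonal (fun i => l i ^ 2) = Matrix.diagonal l * Matrix.diagonal l := by
      rw [Matrix.diagonal_mul_diagonal]; simp [sq]
    rw [this]
    simp only [Matrix.transpose_mul, Matrix.diagonal_transpose, hQt, Matrix.mul_assoc]
  have e2 : (Ψᵀ * P * (Ψᵀ * P)ᵀ).trace ≤ a ^ 2 * (Ψ * Ψᵀ).trace := by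
    rw [Matrix.trace_mul_comm Ψ Ψᵀ]
    have := aux_trace_tt Ψᵀ
    rw [Matrix.transpose_transpose] at this
    rw [this, aux_trace_tt, Finset.mul_sum]
    refine Finset.sum_le_sum fun i _ => ?_
    have h := hAk (P *ᵥ (fun j => Ψᵀ i j))
    rw [Matrix.mulVec_mulVec, hAP, Matrix.one_mulVec] at h
    have hv : (fun j => (Ψᵀ * P) i j) = P *ᵥ (fun j => Ψᵀ i j) := by
      ext j
      conv_rhs => rw [← hPt]
      simp [Matrix.mul_apply, Matrix.mulVec, dotProduct, mul_comm]
    rw [hv]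
    exact h
  rw [le_div_iff₀ (by positivity)]
  refine le_trans ?_ e2
  rw [e1, aux_trace_tt, Matrix.trace_mul_comm]
  have := aux_trace_tt (Ψᵀ * P)ᵀ
  rw [Matrix.transpose_transpose] at this
  rw [this, Finset.sum_mul]
  refine Finset.sum_le_sum fun j _ => ?_
  set y : Fin n → ℝ := Pi.single j 1
  set u : Fin k → ℝ := fun i => l i * (Ψᵀ *ᵥ (Q *ᵥ y)) i with hu
  have hy : Ak *ᵥ (Q *ᵥ y) + Ψ *ᵥ u = y := by
    have : u = Matrix.diagonal l *ᵥ (Ψᵀ *ᵥ (Q *ᵥ y)) := by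
      ext i; rw [Matrix.mulVec_diagonal]
    rw [this]
    simp only [Matrix.mulVec_mulVec, ← Matrix.add_mulVec]
    have h : Ak * Q + Ψ * (Matrix.diagonal l * (Ψᵀ * Q)) = 1 := by
      rw [← hAQ, hA, Matrix.add_mul]; simp only [Matrix.mul_assoc]
    rw [h, Matrix.one_mulVec]
  have key := aux_u_bound Ψ l hl hPA hPt b g hb hg hP hG (Q *ᵥ y) u hu y hy
  have eu : (fun i => (Q * Ψ * Matrix.diagonal l) j i) = u := by
    ext i
    rw [hu, Matrix.mul_diagonal, Matrix.mulVec_mulVec]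
    have : Q * Ψ = (Ψᵀ * Q)ᵀ := by simp [Matrix.transpose_mul, hQt]
    rw [this]
    simp [y, mul_comm]
  have ew : (fun i => (Ψᵀ * P)ᵀ j i) = Ψᵀ *ᵥ (P *ᵥ y) := by
    rw [Matrix.mulVec_mulVec]
    ext i
    simp [y]
  rw [eu, ew, mul_comm, ← mul_pow]
  exact key

/-- second term -/
theorem aux_second {n : ℕ} {A Q M : Matrix (Fin n) (Fin n) ℝ} (hAQ : A * Q = 1) (hQt : Qᵀ = Q)
    (a : ℝ) (hA : ∀ x : Fin n → ℝ, x ⬝ᵥ x ≤ a ^ 2 * ((A *ᵥ x) ⬝ᵥ (A *ᵥ x)))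
    (f : ℕ → Fin n → ℝ) (c : ℕ → ℝ) (hc : ∀ i, 0 ≤ c i)
    (hM : ∀ j l, HasSum (fun i => c i * f i j * f i l) (M j l)) :
    (Q * M * Q).trace ≤ a ^ 2 * M.trace := by
  have h1 : HasSum (fun i => c i * (f i ⬝ᵥ f i)) M.trace := by
    have : HasSum (fun i => ∑ j, c i * f i j * f i j) (∑ j, M j j) :=
      hasSum_sum fun j _ => hM j j
    convert this using 2
    · simp [dotProduct, Finset.mul_sum, mul_assoc]
    · simp [Matrix.trace]
  have h2 : HasSum (fun i => c i * ((Q *ᵥ f i) ⬝ᵥ (Q *ᵥ f i))) (Q * M * Q).trace := by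
    have : HasSum (fun i => ∑ p, ∑ l, (∑ j, Q p j * (c i * f i j * f i l)) * Q l p)
        (∑ p, ∑ l, (∑ j, Q p j * M j l) * Q l p) :=
      hasSum_sum fun p _ => hasSum_sum fun l _ =>
        (hasSum_sum fun j _ => (hM j l).mul_left _).mul_right _
    convert this using 2 with i
    · rw [dotProduct, Finset.mul_sum]
      refine Finset.sum_congr rfl fun p _ => ?_
      have hq : ∀ l, Q l p = Q p l := fun l => by conv_lhs => rw [← hQt, Matrix.transpose_apply]
      simp only [hq, Matrix.mulVec, dotProduct]
      rw [← mul_assoc, Finset.mul_sum]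
      refine Finset.sum_congr rfl fun l _ => ?_
      rw [Finset.mul_sum, Finset.sum_mul, Finset.sum_mul]
      refine Finset.sum_congr rfl fun j _ => ?_
      ring
    · simp [Matrix.trace, Matrix.mul_apply]
  refine hasSum_le (fun i => ?_) h2 (h1.mul_left (a ^ 2))
  have h := hA (Q *ᵥ f i)
  rw [Matrix.mulVec_mulVec, hAQ, Matrix.one_mulVec] at h
  nlinarith [mul_le_mul_of_nonneg_left h (hc i)]

theorem aux_split (c : ℕ → ℝ) (ψ : ℕ → 𝒳 → ℝ) {n : ℕ} (k : ℕ) (X : Fin n → 𝒳)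
    (h : ∀ j l, Summable fun i : ℕ => c i * ψ i (X j) * ψ i (X l)) :
    kerMat c ψ X = psiMat ψ k X * Matrix.diagonal (fun i : Fin k => c i) * (psiMat ψ k X)ᵀ
      + kerMatGT c ψ k X := by
  ext j l
  simp only [kerMat, kerMatGT, Matrix.add_apply, Matrix.of_apply]
  rw [← (h j l).sum_add_tsum_nat_add k]
  congr 1
  · rw [Matrix.mul_apply, Finset.sum_range]
    refine Finset.sum_congr rfl fun i _ => ?_
    rw [Matrix.mul_diagonal]
    simp only [psiMat, Matrix.of_apply, Matrix.transpose_apply]; ring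
  · simp only [add_comm]

theorem deterministic_variance_bound (𝒳 : Type u) (lam : ℕ → ℝ) (ψ : ℕ → 𝒳 → ℝ)
    (hnn : ∀ i, 0 ≤ lam i) (hsum : Summable lam)
    (n k : ℕ) (hk : 1 ≤ k) (X : Fin n → 𝒳) (γ σ : ℝ) (hγ : 0 ≤ γ) (hσ : 0 ≤ σ)
    (hker : ∀ j l, Summable fun i : ℕ => lam i * ψ i (X j) * ψ i (X l))
    (hsq : ∀ j l, Summable fun i : ℕ => (lam i) ^ 2 * ψ i (X j) * ψ i (X l))
    (hAk : (kerMatGT lam ψ k X + ((n : ℝ) * γ) • (1 : Matrix (Fin n) (Fin n) ℝ)).PosDef)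
    (hGram : 0 < eigval ((psiMat ψ k X)ᵀ * psiMat ψ k X) k) :
    σ ^ 2 * ((ridgeMat lam ψ X γ)⁻¹ * sqKerMat lam ψ X * (ridgeMat lam ψ X γ)⁻¹).trace ≤
      σ ^ 2 *
        ((eigval ((kerMatGT lam ψ k X +
                ((n : ℝ) * γ) • (1 : Matrix (Fin n) (Fin n) ℝ))⁻¹) 1) ^ 2 *
            (psiMat ψ k X * (psiMat ψ k X)ᵀ).trace /
            ((eigval ((kerMatGT lam ψ k X +
                ((n : ℝ) * γ) • (1 : Matrix (Fin n) (Fin n) ℝ))⁻¹) n) ^ 2 *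
              (eigval ((psiMat ψ k X)ᵀ * psiMat ψ k X) k) ^ 2) +
          (eigval ((kerMatGT lam ψ k X +
                ((n : ℝ) * γ) • (1 : Matrix (Fin n) (Fin n) ℝ))⁻¹) 1) ^ 2 *
            ∑ j, ∑' i : ℕ, (lam (k + i)) ^ 2 * (ψ (k + i) (X j)) ^ 2) := by
  rcases Nat.eq_zero_or_pos n with hn0 | hn
  · subst hn0
    refine mul_le_mul_of_nonneg_left ?_ (sq_nonneg σ)
    simp [Matrix.trace]
  refine mul_le_mul_of_nonneg_left ?_ (sq_nonneg σ)
  have hsplit := aux_split lam ψ k X hker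
  have hsplit2 : sqKerMat lam ψ X = _ := aux_split (fun i => lam i ^ 2) ψ k X hsq
  have hA : ridgeMat lam ψ X γ
      = (kerMatGT lam ψ k X + ((n : ℝ) * γ) • (1 : Matrix (Fin n) (Fin n) ℝ))
        + psiMat ψ k X * Matrix.diagonal (fun i : Fin k => lam i) * (psiMat ψ k X)ᵀ := by
    rw [ridgeMat, hsplit]; abel
  set Ak := kerMatGT lam ψ k X + ((n : ℝ) * γ) • (1 : Matrix (Fin n) (Fin n) ℝ) with hAkdef
  set Ψ := psiMat ψ k X with hΨ
  set A := ridgeMat lam ψ X γ with hAdef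
  have hApd : A.PosDef := by
    rw [hA]
    refine hAk.add_posSemidef ?_
    exact (Matrix.PosSemidef.diagonal (fun i : Fin k => hnn i)).mul_mul_conjTranspose_same Ψ
  have hPpd : Ak⁻¹.PosDef := hAk.inv
  have uAk : IsUnit Ak.det := (Matrix.isUnit_iff_isUnit_det _).mp hAk.isUnit
  have uA : IsUnit A.det := (Matrix.isUnit_iff_isUnit_det _).mp hApd.isUnit
  have hPA := Matrix.nonsing_inv_mul Ak uAk
  have hAP := Matrix.mul_nonsing_inv Ak uAk
  have hAQ := Matrix.mul_nonsing_inv A uA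
  have hPt : (Ak⁻¹)ᵀ = Ak⁻¹ := hPpd.isHermitian
  have hQt : (A⁻¹)ᵀ = A⁻¹ := hApd.inv.isHermitian
  have ha : 0 < eigval Ak⁻¹ 1 := aux_eigval_pos hPpd 1 (by omega)
  have hb : 0 < eigval Ak⁻¹ n := aux_eigval_pos hPpd n (by omega)
  set a := eigval Ak⁻¹ 1
  set b := eigval Ak⁻¹ n
  have hPb := aux_le_quad hPpd.isHermitian b (fun i => aux_eigval_last_le _ i)
  have hPa := aux_quad_le hPpd.isHermitian a (fun i => aux_le_eigval_one _ i)
  have hGh : (Ψᵀ * Ψ).IsHermitian := Matrix.isHermitian_conjTranspose_mul_self Ψ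
  have hG := aux_le_quad hGh _ (fun i => aux_eigval_last_le _ i)
  have hAk1 := aux_inv_lower hPpd hPA hAk.isHermitian a ha hPa
  have hA1 : ∀ x : Fin n → ℝ, x ⬝ᵥ x ≤ a * (x ⬝ᵥ (A *ᵥ x)) := by
    intro x
    have h0 := ((Matrix.PosSemidef.diagonal
      (fun i : Fin k => hnn i)).mul_mul_conjTranspose_same Ψ).dotProduct_mulVec_nonneg x
    have h0' : 0 ≤ x ⬝ᵥ ((Ψ * Matrix.diagonal (fun i : Fin k => lam i) * Ψᵀ) *ᵥ x) := h0
    rw [hA, Matrix.add_mulVec, dotProduct_add]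
    nlinarith [hAk1 x, mul_nonneg ha.le h0']
  have hAk2 := aux_norm_inv a hAk1
  have hA2 := aux_norm_inv a hA1
  have t1 := aux_first Ψ (fun i : Fin k => lam i) (fun i => hnn i) hPA hAP hPt hAQ hQt hA a b _
    hb hGram hPb hAk2 hG
  have t2 := aux_second (M := kerMatGT (fun i => lam i ^ 2) ψ k X) hAQ hQt a hA2
    (fun i j => ψ (k + i) (X j)) (fun i => lam (k + i) ^ 2) (fun i => sq_nonneg _)
    (fun j l => by
      have := (summable_nat_add_iff k).mpr (hsq j l)
      simp only [add_comm _ k] at this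
      exact this.hasSum)
  have e : (kerMatGT (fun i => lam i ^ 2) ψ k X).trace
      = ∑ j, ∑' i : ℕ, (lam (k + i)) ^ 2 * (ψ (k + i) (X j)) ^ 2 := by
    simp [Matrix.trace, kerMatGT, sq, mul_assoc]
  rw [hsplit2, Matrix.mul_add, Matrix.add_mul, Matrix.trace_add, ← e]
  exact add_le_add t1 t2

end KRRPaper

end
end

section
/- Divergence of eigenfunction moments for the Gaussian kernel with Gaussian inputs. Let H_i denote the i-th physicists' Hermite polynomial, H_i(x) = (−1)^i·e^{x²}·(dⁱ/dxⁱ)e^{−x²}, and define ψ_i(x) := 2^{1/4}·(2^i·i!)^{−1/2}·e^{−x²/4}·H_i(x) (these are the Mercer eigenfunctions of the RBF kernel K(x,y) = exp(−(3/8)(x−y)²) with standard Gaussian inputs). Then for every real p ≥ 3 there exist a constant c > 0 and i₀ ∈ ℕ such that for all i ≥ i₀: ∫_ℝ |ψ_i(x)|^p · (2π)^{−1/2}·e^{−x²/2} dx ≥ c·exp((p−2)·i/4). In particular, for each fixed p ≥ 3 the moments (E_{x∼N(0,1)}[|ψ_i(x)|^p])^{1/p} tend to infinity as i → ∞, so the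 sequence (ψ_i) is not uniformly sub-Gaussian. -/
open MeasureTheory Matrix Filter

noncomputable section

namespace KRRPaper

universe u

variable {𝒳 : Type u}

/-- the `i`-th physicists' Hermite polynomial `H_i(x) = (-1)^i e^{x²} (d/dx)^i e^{-x²}` -/
def physHermite (i : ℕ) (x : ℝ) : ℝ :=
  (-1 : ℝ) ^ i * Real.exp (x ^ 2) * iteratedDeriv i (fun t : ℝ => Real.exp (-t ^ 2)) x

/-- the Mercer eigenfunctions of the RBF kernel `exp(-(3/8)(x-y)²)` with standard
Gaussian inputs -/
def psiRBF (i : ℕ) (x : ℝ) : ℝ :=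
  (2 : ℝ) ^ ((1 : ℝ) / 4) / Real.sqrt ((2 : ℝ) ^ i * (Nat.factorial i : ℝ)) *
    Real.exp (-x ^ 2 / 4) * physHermite i x

lemma poly_bound (P : Polynomial ℝ) : ∀ δ : ℝ, 0 < δ →
    ∃ C : ℝ, 0 ≤ C ∧ ∀ x : ℝ, |P.eval x| ≤ C * Real.exp (δ * x ^ 2) := by
  have hX : ∀ δ : ℝ, 0 < δ → ∃ C : ℝ, 0 ≤ C ∧ ∀ x : ℝ, |x| ≤ C * Real.exp (δ * x ^ 2) := by
    intro δ hδ
    refine ⟨1 + 1 / δ, by positivity, fun x => ?_⟩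
    have h1 := Real.add_one_le_exp (δ * x ^ 2)
    have h2 : |x| ≤ 1 + x ^ 2 := by
      rw [← sq_abs]; nlinarith [sq_nonneg (|x| - 1), abs_nonneg x]
    have h3 : 1 + x ^ 2 ≤ (1 + 1 / δ) * (δ * x ^ 2 + 1) := by
      have : (1 + 1 / δ) * (δ * x ^ 2 + 1) = 1 + x ^ 2 + δ * x ^ 2 + 1 / δ := by
        field_simp
        ring
      rw [this]
      have : 0 ≤ δ * x ^ 2 := by positivity
      have : 0 ≤ 1 / δ := by positivity
      linarith
    calc |x| ≤ _ := h2
      _ ≤ _ := h3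
      _ ≤ _ := by gcongr
  induction P using Polynomial.induction_on' with
  | add p q hp hq =>
    intro δ hδ
    obtain ⟨C, hC, h⟩ := hp δ hδ
    obtain ⟨D, hD, h'⟩ := hq δ hδ
    refine ⟨C + D, by positivity, fun x => ?_⟩
    rw [Polynomial.eval_add, add_mul]
    exact (abs_add_le _ _).trans (add_le_add (h x) (h' x))
  | monomial n a =>
    induction n with
    | zero =>
      intro δ hδ
      refine ⟨|a|, abs_nonneg _, fun x => ?_⟩
      simp only [Polynomial.monomial_zero_left, Polynomial.eval_C]
      have : 1 ≤ Real.exp (δ * x ^ 2) := Real.one_le_exp (by positivity)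
      nlinarith [abs_nonneg a]
    | succ n ih =>
      intro δ hδ
      obtain ⟨C, hC, h⟩ := ih (δ / 2) (by positivity)
      obtain ⟨D, hD, h'⟩ := hX (δ / 2) (by positivity)
      refine ⟨C * D, by positivity, fun x => ?_⟩
      have e : (Polynomial.monomial (n + 1) a).eval x = (Polynomial.monomial n a).eval x * x := by
        simp [Polynomial.eval_monomial, pow_succ, mul_assoc]
      have e2 : Real.exp (δ * x ^ 2) = Real.exp (δ / 2 * x ^ 2) * Real.exp (δ / 2 * x ^ 2) := by
        rw [← Real.exp_add]; congr 1; ring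
      rw [e, abs_mul, e2]
      calc _ ≤ (C * Real.exp (δ / 2 * x ^ 2)) * (D * Real.exp (δ / 2 * x ^ 2)) :=
            mul_le_mul (h x) (h' x) (abs_nonneg _) (by positivity)
        _ = _ := by ring

lemma iter_poly (n : ℕ) : ∃ P : Polynomial ℝ, ∀ x : ℝ,
    iteratedDeriv n (fun t : ℝ => Real.exp (-t ^ 2)) x = P.eval x * Real.exp (-x ^ 2) := by
  induction n with
  | zero => exact ⟨1, fun x => by simp⟩
  | succ n ih =>
    obtain ⟨P, hP⟩ := ih
    refine ⟨Polynomial.derivative P - 2 * Polynomial.X * P, fun x => ?_⟩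
    rw [iteratedDeriv_succ, funext hP]
    have h1 : HasDerivAt (fun x : ℝ => Real.exp (-x ^ 2)) (Real.exp (-x ^ 2) * (-(2 * x))) x := by
      have := ((hasDerivAt_pow 2 x).neg).exp
      simpa using this
    have h2 := ((P.hasDerivAt x).mul h1).deriv
    refine Eq.trans h2 ?_
    simp
    ring

lemma iter_hasDeriv (n : ℕ) (x : ℝ) :
    HasDerivAt (iteratedDeriv n (fun t : ℝ => Real.exp (-t ^ 2)))
      (iteratedDeriv (n + 1) (fun t : ℝ => Real.exp (-t ^ 2)) x) x := by
  obtain ⟨P, hP⟩ := iter_poly n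
  rw [iteratedDeriv_succ]
  apply DifferentiableAt.hasDerivAt
  rw [funext hP]
  fun_prop

lemma gauss_lin (a b : ℝ) (ha : 0 < a) :
    Integrable (fun x : ℝ => Real.exp (-a * x ^ 2 + b * x)) ∧
    ∫ x : ℝ, Real.exp (-a * x ^ 2 + b * x) = √(Real.pi / a) * Real.exp (b ^ 2 / (4 * a)) := by
  have e : (fun x : ℝ => Real.exp (-a * x ^ 2 + b * x)) = fun x : ℝ =>
      (fun y : ℝ => Real.exp (-a * y ^ 2)) (x - b / (2 * a)) * Real.exp (b ^ 2 / (4 * a)) := by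
    funext x
    simp only
    rw [← Real.exp_add]
    congr 1
    field_simp
    ring
  rw [e]
  constructor
  · exact ((integrable_exp_neg_mul_sq ha).comp_sub_right (b / (2 * a))).mul_const _
  · rw [integral_mul_const, integral_sub_right_eq_self (fun y : ℝ => Real.exp (-a * y ^ 2)),
      integral_gaussian]

lemma iter_integrable (n : ℕ) (b : ℝ) :
    Integrable (fun x : ℝ => Real.exp (b * x) *
      iteratedDeriv n (fun t : ℝ => Real.exp (-t ^ 2)) x) := by
  obtain ⟨P, hP⟩ := iter_poly n
  obtain ⟨C, hC, h⟩ := poly_bound P (1 / 2) (by norm_num)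
  simp_rw [hP]
  refine ((gauss_lin (1 / 2) b (by norm_num)).1.const_mul C).mono' ?_ ?_
  · exact Continuous.aestronglyMeasurable (by fun_prop)
  · refine Eventually.of_forall fun x => ?_
    rw [Real.norm_eq_abs, abs_mul, abs_mul, Real.abs_exp, Real.abs_exp]
    calc _ ≤ Real.exp (b * x) * ((C * Real.exp (1 / 2 * x ^ 2)) * Real.exp (-x ^ 2)) := by
          gcongr; exact h x
      _ = C * (Real.exp (b * x) * Real.exp (1 / 2 * x ^ 2) * Real.exp (-x ^ 2)) := by ring
      _ = _ := by
        rw [← Real.exp_add, ← Real.exp_add]; congr 2; ring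

lemma iter_integral (n : ℕ) (b : ℝ) :
    ∫ x : ℝ, Real.exp (b * x) * iteratedDeriv n (fun t : ℝ => Real.exp (-t ^ 2)) x
      = (-b) ^ n * (√Real.pi * Real.exp (b ^ 2 / 4)) := by
  induction n with
  | zero =>
    have := (gauss_lin 1 b one_pos).2
    simp only [div_one, mul_one] at this
    rw [pow_zero, one_mul, ← this]
    congr 1
    funext x
    rw [iteratedDeriv_zero, ← Real.exp_add]
    congr 1
    ring
  | succ n ih =>
    have hd : ∀ x : ℝ, HasDerivAt (fun x : ℝ => Real.exp (b * x)) (b * Real.exp (b * x)) x := by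
      intro x
      have := ((hasDerivAt_id x).const_mul b).exp
      simpa [mul_comm] using this
    have hi : Integrable (fun x : ℝ => b * Real.exp (b * x) *
        iteratedDeriv n (fun t : ℝ => Real.exp (-t ^ 2)) x) := by
      simpa only [mul_assoc] using (iter_integrable n b).const_mul b
    have := integral_mul_deriv_eq_deriv_mul_of_integrable (fun x _ => hd x)
      (fun x _ => iter_hasDeriv n x) (iter_integrable (n + 1) b) hi (iter_integrable n b)
    rw [this]
    simp_rw [mul_assoc]
    rw [integral_const_mul, ih]
    ring

lemma holder_low (p q : ℝ) (hpq : p.HolderConjugate q) (f g w : ℝ → ℝ)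
    (hf : ∀ x, 0 ≤ f x) (hg : ∀ x, 0 ≤ g x) (hw : ∀ x, 0 ≤ w x)
    (h1 : Integrable (fun x => f x ^ p * w x)) (h2 : Integrable (fun x => g x ^ q * w x))
    (h3 : Integrable (fun x => f x * g x * w x)) (I B : ℝ) (hI : 0 < I)
    (hI' : I ≤ ∫ x, f x * g x * w x) (hB : 0 < B) (hB' : ∫ x, g x ^ q * w x = B) :
    I ^ p * B ^ (1 - p) ≤ ∫ x, f x ^ p * w x := by
  obtain ⟨L, hL, rfl⟩ : ∃ L : ℝ, 0 < L ∧ I = L * B := ⟨I / B, by positivity, by field_simp⟩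
  have hp := hpq.pos
  have hq := hpq.symm.pos
  have hq' : (p - 1) * q = p := hpq.sub_one_mul_conj
  have e1 : (L * B) ^ p * B ^ (1 - p) = L ^ p * B := by
    rw [Real.mul_rpow hL.le hB.le, mul_assoc, ← Real.rpow_add hB]
    simp
  rw [e1]
  have hs : (L ^ (p - 1)) ^ q = L ^ p := by rw [← Real.rpow_mul hL.le, hq']
  have hs2 : L ^ (p - 1) * L = L ^ p := by
    rw [← Real.rpow_add_one hL.ne']; congr 1; ring
  have key : ∫ x, L ^ (p - 1) * (f x * g x * w x) ≤
      ∫ x, (1 / p * (f x ^ p * w x) + L ^ p / q * (g x ^ q * w x)) := by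
    refine integral_mono (h3.const_mul _) ((h1.const_mul _).add (h2.const_mul _)) fun x => ?_
    have hy := Real.young_inequality_of_nonneg (hf x)
      (mul_nonneg (Real.rpow_nonneg hL.le (p - 1)) (hg x)) hpq
    rw [Real.mul_rpow (Real.rpow_nonneg hL.le _) (hg x), hs] at hy
    have := mul_le_mul_of_nonneg_right hy (hw x)
    calc _ = f x * (L ^ (p - 1) * g x) * w x := by ring
      _ ≤ _ := this
      _ = _ := by ring
  rw [integral_add (h1.const_mul _) (h2.const_mul _), integral_const_mul, integral_const_mul,
    integral_const_mul, hB'] at key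
  have h5 : L ^ p * B ≤ L ^ (p - 1) * ∫ x, f x * g x * w x := by
    rw [← hs2, mul_assoc]
    gcongr
  have h6 := hpq.inv_add_inv_eq_one
  have h7 : L ^ p / q * B = (1 - p⁻¹) * (L ^ p * B) := by
    rw [← h6]; ring
  rw [h7] at key
  have h8 : p⁻¹ * (L ^ p * B) ≤ p⁻¹ * ∫ x, f x ^ p * w x := by
    rw [one_div] at key; linarith
  exact le_of_mul_le_mul_left h8 (by positivity)

lemma fact_le (i : ℕ) (hi : 1 ≤ i) :
    (i.factorial : ℝ) ≤ Real.exp 1 * i * (i / Real.exp 1) ^ i := by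
  obtain ⟨k, rfl⟩ : ∃ k, i = k + 1 := ⟨i - 1, by omega⟩
  have h := Stirling.stirlingSeq'_antitone (Nat.zero_le k)
  simp only [Function.comp, Nat.succ_eq_add_one, zero_add, Stirling.stirlingSeq_one] at h
  unfold Stirling.stirlingSeq at h
  rw [div_le_iff₀ (by positivity)] at h
  refine h.trans ?_
  rw [Real.sqrt_mul (by norm_num)]
  have e : Real.exp 1 / √2 * (√2 * √((k + 1 : ℕ) : ℝ) * (((k + 1 : ℕ) : ℝ) / Real.exp 1) ^ (k + 1))
    = Real.exp 1 * √((k + 1 : ℕ) : ℝ) * (((k + 1 : ℕ) : ℝ) / Real.exp 1) ^ (k + 1) := by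
    field_simp
  rw [e]
  gcongr
  apply Real.sqrt_le_iff.2
  have : (1 : ℝ) ≤ ((k + 1 : ℕ) : ℝ) := by exact_mod_cast hi
  constructor <;> nlinarith

lemma M_bound (p : ℝ) (hp : 3 ≤ p) (i : ℕ) (hi : 1 ≤ i) (t : ℝ) (ht : 0 ≤ t)
    (htt : (p + 2) / (3 * p - 2) * t ^ 2 = i / 2) :
    √((p - 2) / (6 * p) / Real.exp 1) * Real.exp ((p - 2) * i / (4 * p)) ≤
      (2 * t) ^ i / √((2 : ℝ) ^ i * (Nat.factorial i : ℝ)) * Real.exp (-(i / 2)) := by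
  have hp2 : 0 < p - 2 := by linarith
  have hp3 : 0 < 3 * p - 2 := by linarith
  have hp4 : 3 * p - 2 ≠ 0 := hp3.ne'
  have hp5 : p * 3 - 2 ≠ 0 := by rw [mul_comm]; exact hp4
  have hi0 : (0 : ℝ) < i := by exact_mod_cast hi
  have hf : (0 : ℝ) < i.factorial := by exact_mod_cast i.factorial_pos
  refine (pow_le_pow_iff_left₀ (by positivity) (by positivity) two_ne_zero).1 ?_
  rw [mul_pow, Real.sq_sqrt (by positivity), mul_pow, div_pow, Real.sq_sqrt (by positivity),
    ← Real.exp_nat_mul, ← Real.exp_nat_mul, ← pow_mul, mul_comm i 2, pow_mul, mul_pow]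
  have e1 : t ^ 2 = i / 2 * ((3 * p - 2) / (p + 2)) := by
    rw [← htt]; field_simp
  have e2 : ((2 : ℝ) ^ 2 * t ^ 2) ^ i = 2 ^ i * ((3 * p - 2) / (p + 2)) ^ i * (i : ℝ) ^ i := by
    rw [e1, ← mul_pow, ← mul_pow]; congr 1; ring
  have e3 : Real.exp (((2 : ℕ) : ℝ) * -((i : ℝ) / 2)) = (Real.exp 1 ^ i)⁻¹ := by
    rw [← Real.exp_nat_mul, ← Real.exp_neg]; congr 1; push_cast; ring
  rw [e2, e3]
  have e4 : 2 ^ i * ((3 * p - 2) / (p + 2)) ^ i * (i : ℝ) ^ i / (2 ^ i * (i.factorial : ℝ)) *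
      (Real.exp 1 ^ i)⁻¹ = ((3 * p - 2) / (p + 2)) ^ i * (i / Real.exp 1) ^ i / i.factorial := by
    rw [div_pow (i : ℝ)]; field_simp
  rw [e4, le_div_iff₀ hf]
  have hl : Real.exp (2 * (p - 2) / (3 * p)) ≤ (3 * p - 2) / (p + 2) := by
    rw [← Real.le_log_iff_exp_le (by positivity)]
    refine le_trans ?_ (Real.one_sub_inv_le_log_of_pos (by positivity))
    rw [inv_div, le_sub_iff_add_le, div_add_div _ _ (by positivity) (by positivity),
      div_le_one (by positivity)]
    nlinarith
  have hl2 : Real.exp ((p - 2) / (6 * p) * i) * Real.exp (((2 : ℕ) : ℝ) * ((p - 2) * i / (4 * p)))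
      ≤ ((3 * p - 2) / (p + 2)) ^ i := by
    refine le_trans (le_of_eq ?_) (pow_le_pow_left₀ (Real.exp_pos _).le hl i)
    rw [← Real.exp_add, ← Real.exp_nat_mul]
    congr 1
    push_cast
    field_simp
    ring
  have hl3 : (p - 2) / (6 * p) * i ≤ Real.exp ((p - 2) / (6 * p) * i) := by
    have := Real.add_one_le_exp ((p - 2) / (6 * p) * i)
    linarith
  calc _ ≤ (p - 2) / (6 * p) / Real.exp 1 * Real.exp (((2 : ℕ) : ℝ) * ((p - 2) * i / (4 * p))) *
        (Real.exp 1 * i * (i / Real.exp 1) ^ i) := by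
        gcongr; exact fact_le i hi
    _ = ((p - 2) / (6 * p) * i) * Real.exp (((2 : ℕ) : ℝ) * ((p - 2) * i / (4 * p))) *
        (i / Real.exp 1) ^ i := by field_simp
    _ ≤ Real.exp ((p - 2) / (6 * p) * i) * Real.exp (((2 : ℕ) : ℝ) * ((p - 2) * i / (4 * p))) *
        (i / Real.exp 1) ^ i := by gcongr
    _ ≤ _ := by gcongr

lemma psi_eq (i : ℕ) (x : ℝ) : psiRBF i x =
    (-1) ^ i * ((2 : ℝ) ^ ((1 : ℝ) / 4) / √((2 : ℝ) ^ i * (Nat.factorial i : ℝ))) *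
      (Real.exp (3 / 4 * x ^ 2) * iteratedDeriv i (fun t : ℝ => Real.exp (-t ^ 2)) x) := by
  unfold psiRBF physHermite
  have : Real.exp (3 / 4 * x ^ 2) = Real.exp (-x ^ 2 / 4) * Real.exp (x ^ 2) := by
    rw [← Real.exp_add]; congr 1; ring
  rw [this]; ring

lemma psi_cont (i : ℕ) : Continuous (psiRBF i) := by
  obtain ⟨P, hP⟩ := iter_poly i
  rw [funext (psi_eq i)]
  simp_rw [hP]
  fun_prop

lemma psi_bdd (i : ℕ) : ∃ C : ℝ, 0 ≤ C ∧ ∀ x, |psiRBF i x| ≤ C := by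
  obtain ⟨P, hP⟩ := iter_poly i
  obtain ⟨C, hC, h⟩ := poly_bound P (1 / 4) (by norm_num)
  refine ⟨|(-1) ^ i * ((2 : ℝ) ^ ((1 : ℝ) / 4) / √((2 : ℝ) ^ i * (Nat.factorial i : ℝ)))| * C,
    by positivity, fun x => ?_⟩
  rw [psi_eq, abs_mul]
  gcongr
  rw [hP, abs_mul, abs_mul, Real.abs_exp, Real.abs_exp]
  calc _ ≤ Real.exp (3 / 4 * x ^ 2) * ((C * Real.exp (1 / 4 * x ^ 2)) * Real.exp (-x ^ 2)) := by
        gcongr; exact h x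
    _ = C * (Real.exp (3 / 4 * x ^ 2) * Real.exp (1 / 4 * x ^ 2) * Real.exp (-x ^ 2)) := by ring
    _ = C * 1 := by
        rw [← Real.exp_add, ← Real.exp_add]; congr 1; rw [Real.exp_eq_one_iff]; ring
    _ = C := mul_one C

lemma main_bound (p : ℝ) (hp : 3 ≤ p) : ∃ c : ℝ, 0 < c ∧ ∃ i₀ : ℕ, ∀ i : ℕ, i₀ ≤ i →
        c * Real.exp ((p - 2) * i / 4) ≤
          ∫ x : ℝ, |psiRBF i x| ^ p *
            ((2 * Real.pi) ^ (-(1 : ℝ) / 2) * Real.exp (-x ^ 2 / 2)) := by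
  have hp0 : 0 < p := by linarith
  have hp1 : 0 < p - 1 := by linarith
  have hp2 : 0 < p - 2 := by linarith
  have hp3 : 0 < 3 * p - 2 := by linarith
  have hp4 : 3 * p - 2 ≠ 0 := hp3.ne'
  have hp5 : p * 3 - 2 ≠ 0 := by rw [mul_comm]; exact hp4
  have hpq : p.HolderConjugate (p / (p - 1)) := by
    have := Real.HolderConjugate.conjExponent (p := p) (by linarith)
    simpa [Real.conjExponent] using this
  obtain ⟨w0, hw0⟩ : ∃ w0 : ℝ, w0 = (2 * Real.pi) ^ (-(1 : ℝ) / 2) := ⟨_, rfl⟩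
  have hw0p : 0 < w0 := by rw [hw0]; positivity
  rw [← hw0]
  obtain ⟨a, ha⟩ : ∃ a : ℝ, a = (3 * p - 2) / (4 * (p - 1)) := ⟨_, rfl⟩
  have hap : 0 < a := by rw [ha]; positivity
  obtain ⟨α, hα⟩ : ∃ α : ℝ, α = (2 : ℝ) ^ ((1 : ℝ) / 4) * w0 * √Real.pi := ⟨_, rfl⟩
  have hαp : 0 < α := by rw [hα]; positivity
  obtain ⟨b, hb⟩ : ∃ b : ℝ, b = w0 * √(Real.pi / a) := ⟨_, rfl⟩
  have hbp : 0 < b := by rw [hb]; positivity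
  refine ⟨α ^ p * b ^ (1 - p) * √((p - 2) / (6 * p) / Real.exp 1) ^ p, by positivity, 1,
    fun i hi => ?_⟩
  have hi0 : (0 : ℝ) < i := by exact_mod_cast hi
  have hf : (0 : ℝ) < i.factorial := by exact_mod_cast i.factorial_pos
  obtain ⟨t, ht⟩ : ∃ t : ℝ, t = √(i / 2 * ((3 * p - 2) / (p + 2))) := ⟨_, rfl⟩
  have htp : 0 < t := by rw [ht]; positivity
  have htt : (p + 2) / (3 * p - 2) * t ^ 2 = i / 2 := by
    rw [ht, Real.sq_sqrt (by positivity)]; field_simp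
  obtain ⟨K, hK⟩ : ∃ K : ℝ, K = √((2 : ℝ) ^ i * (Nat.factorial i : ℝ)) := ⟨_, rfl⟩
  have hKp : 0 < K := by rw [hK]; positivity
  have hM := M_bound p hp i hi t htp.le htt
  rw [← hK] at hM
  obtain ⟨C, hC, hCb⟩ := psi_bdd i
  have hcont := psi_cont i
  have hprod : ∀ x, psiRBF i x * Real.exp (-x ^ 2 / 4 + 2 * t * x) * (w0 * Real.exp (-x ^ 2 / 2)) =
      ((-1) ^ i * ((2 : ℝ) ^ ((1 : ℝ) / 4) / K * w0)) * (Real.exp (2 * t * x) *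
        iteratedDeriv i (fun t : ℝ => Real.exp (-t ^ 2)) x) := by
    intro x
    have : Real.exp (2 * t * x) = Real.exp (3 / 4 * x ^ 2) * Real.exp (-x ^ 2 / 4 + 2 * t * x) *
        Real.exp (-x ^ 2 / 2) := by
      rw [← Real.exp_add, ← Real.exp_add]; congr 1; ring
    rw [psi_eq, this, hK]; ring
  have hprodInt : Integrable (fun x => psiRBF i x * Real.exp (-x ^ 2 / 4 + 2 * t * x) *
      (w0 * Real.exp (-x ^ 2 / 2))) := by
    simp_rw [hprod]
    exact (iter_integrable i (2 * t)).const_mul _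
  have habs : ∀ x, |psiRBF i x| * Real.exp (-x ^ 2 / 4 + 2 * t * x) *
      (w0 * Real.exp (-x ^ 2 / 2)) = |psiRBF i x * Real.exp (-x ^ 2 / 4 + 2 * t * x) *
      (w0 * Real.exp (-x ^ 2 / 2))| := by
    intro x
    rw [abs_mul, abs_mul, abs_mul w0, Real.abs_exp, Real.abs_exp, abs_of_pos hw0p]
  have hgq : ∀ x : ℝ, Real.exp (-x ^ 2 / 4 + 2 * t * x) ^ (p / (p - 1)) *
      (w0 * Real.exp (-x ^ 2 / 2)) =
      w0 * Real.exp (-a * x ^ 2 + (2 * t * (p / (p - 1))) * x) := by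
    intro x
    rw [← Real.exp_mul, mul_left_comm, ← Real.exp_add]
    congr 2
    rw [ha]
    field_simp
    ring
  have hG := gauss_lin a (2 * t * (p / (p - 1))) hap
  have hH := holder_low p (p / (p - 1)) hpq (fun x => |psiRBF i x|)
    (fun x => Real.exp (-x ^ 2 / 4 + 2 * t * x)) (fun x => w0 * Real.exp (-x ^ 2 / 2))
    (fun x => abs_nonneg _) (fun x => (Real.exp_pos _).le) (fun x => by positivity)
    (by
      have hg0 : Integrable (fun x : ℝ => C ^ p * (w0 * Real.exp (-x ^ 2 / 2))) := by
        have := (((integrable_exp_neg_mul_sq (b := 1 / 2) (by norm_num)).const_mul w0).const_mul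
          (C ^ p))
        refine this.congr (Eventually.of_forall fun x => ?_)
        simp only
        congr 3
        ring
      refine hg0.mono' ?_ ?_
      · refine Continuous.aestronglyMeasurable ?_
        refine Continuous.mul ?_ (by fun_prop)
        exact (hcont.abs).rpow_const (fun x => Or.inr hp0.le)
      · refine Eventually.of_forall fun x => ?_
        rw [Real.norm_of_nonneg (by positivity)]
        gcongr
        exact hCb x)
    (by
      simp_rw [hgq]
      exact hG.1.const_mul _)
    (by
      simp_rw [habs]
      exact hprodInt.abs)
    (α * ((2 * t) ^ i / K) * Real.exp (t ^ 2))
    (b * Real.exp ((2 * t * (p / (p - 1))) ^ 2 / (4 * a)))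
    (by positivity)
    (by
      simp_rw [habs]
      refine le_trans (le_of_eq ?_) (abs_integral_le_integral_abs)
      simp_rw [hprod]
      rw [integral_const_mul, iter_integral, abs_mul, abs_mul, abs_mul ((-(2 * t)) ^ i), abs_pow, abs_pow, abs_neg,
        abs_neg, abs_one, one_pow, one_mul, abs_of_pos (show 0 < 2 * t by positivity),
        abs_of_pos (show 0 < (2 : ℝ) ^ ((1 : ℝ) / 4) / K * w0 by positivity),
        abs_of_pos (show 0 < √Real.pi * Real.exp ((2 * t) ^ 2 / 4) by positivity), hα]
      have : (2 * t) ^ 2 / 4 = t ^ 2 := by ring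
      rw [this]
      ring)
    (by positivity)
    (by
      simp_rw [hgq]
      rw [integral_const_mul, hG.2, hb]
      ring)
  refine le_trans ?_ hH
  have hfin : (α * ((2 * t) ^ i / K) * Real.exp (t ^ 2)) ^ p *
      (b * Real.exp ((2 * t * (p / (p - 1))) ^ 2 / (4 * a))) ^ (1 - p) =
      α ^ p * b ^ (1 - p) * ((2 * t) ^ i / K * Real.exp (-(i / 2))) ^ p := by
    rw [mul_assoc α, Real.mul_rpow hαp.le (by positivity),
      Real.mul_rpow (x := (2 * t) ^ i / K) (by positivity) (Real.exp_pos _).le,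
      Real.mul_rpow (x := (2 * t) ^ i / K) (by positivity) (Real.exp_pos _).le,
      Real.mul_rpow hbp.le (Real.exp_pos _).le, ← Real.exp_mul, ← Real.exp_mul, ← Real.exp_mul]
    have : Real.exp (-((i : ℝ) / 2) * p) = Real.exp (t ^ 2 * p) *
        Real.exp ((2 * t * (p / (p - 1))) ^ 2 / (4 * a) * (1 - p)) := by
      rw [← Real.exp_add]
      congr 1
      rw [← htt, ha]
      field_simp
      ring
    rw [this]
    ring
  rw [hfin, mul_assoc]
  gcongr
  have := Real.rpow_le_rpow (by positivity) hM hp0.le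
  refine le_trans (le_of_eq ?_) this
  rw [Real.mul_rpow (by positivity) (Real.exp_pos _).le, ← Real.exp_mul]
  congr 2
  field_simp

theorem rbf_moments_diverge (p : ℝ) (hp : 3 ≤ p) :
    (∃ c : ℝ, 0 < c ∧ ∃ i₀ : ℕ, ∀ i : ℕ, i₀ ≤ i →
        c * Real.exp ((p - 2) * i / 4) ≤
          ∫ x : ℝ, |psiRBF i x| ^ p *
            ((2 * Real.pi) ^ (-(1 : ℝ) / 2) * Real.exp (-x ^ 2 / 2))) ∧
      Tendsto (fun i : ℕ =>
          (∫ x : ℝ, |psiRBF i x| ^ p *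
            ((2 * Real.pi) ^ (-(1 : ℝ) / 2) * Real.exp (-x ^ 2 / 2))) ^ (1 / p))
        atTop atTop := by
  have h := main_bound p hp
  refine ⟨h, ?_⟩
  obtain ⟨c, hc, i₀, hi⟩ := h
  refine (tendsto_rpow_atTop (y := 1 / p) (by positivity)).comp ?_
  refine tendsto_atTop_mono' atTop (eventually_atTop.2 ⟨i₀, hi⟩) ?_
  refine Tendsto.const_mul_atTop hc (Real.tendsto_exp_atTop.comp ?_)
  have h2 : 0 < (p - 2) / 4 := by linarith
  refine (tendsto_natCast_atTop_atTop.const_mul_atTop h2).congr fun i => ?_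
  ring

end KRRPaper

end
end
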